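/- For every integer k ≥ 3, Euler's totient function satisfies φ(k) ≥ k / (1.7811·log log k + 2.51/(log log k)). -/

import Mathlib

/-!
A finite combination of the identities `∑_{d ∣ k} Λ(d) = log k` at the scales `x / d`, with weights
`κ_d` summing to zero, gives Chebyshev-type bounds `log x - c + O(log x / x)` on both sides for the
first Riesz mean of `∑ Λ(n) / n`. Integrating these by parts yields an explicit upper bound for
`∑_{n ≤ x} Λ(n) / (n log n)`; its constant is `γ`, because comparing `log ζ(1 + δ)` with the
harmonic series as `δ → 0` rules out anything larger. Since `γ < log 1.7811`, this settles
`log log k ≥ 9`.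

For smaller `k`, let `R#` be a primorial. If `k` has at most as many prime factors as `R#`, then
`k / φ(k) ≤ R# / φ(R#)`, and if it has more, then `k ≥ R# (R + 1)`. As the right-hand side of the
bound increases slowly, a sparse list of primorials suffices, and these are checked by integer
arithmetic.
-/

open Finset Filter MeasureTheory Real Topology
open scoped ArithmeticFunction.vonMangoldt

/-- The first Riesz mean `∑_{0 < k ≤ x} c_k / k · (1 - k / x)` of the series `∑ c_k / k`. -/
noncomputable def rieszMean (c : ℕ → ℝ) (x : ℝ) : ℝ :=
  ∑ k ∈ Ioc 0 ⌊x⌋₊, c k * ((k : ℝ)⁻¹ - x⁻¹)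

theorem mul_rieszMean (c : ℕ → ℝ) {x : ℝ} (hx : x ≠ 0) :
    x * rieszMean c x = x * ∑ k ∈ Ioc 0 ⌊x⌋₊, c k * (k : ℝ)⁻¹ - ∑ k ∈ Ioc 0 ⌊x⌋₊, c k := by
  simp only [rieszMean, mul_sum, ← sum_sub_distrib]
  exact sum_congr rfl fun k _ ↦ by field_simp

theorem rieszMean_eq_zero_of_lt_one (c : ℕ → ℝ) {x : ℝ} (hx : x < 1) : rieszMean c x = 0 := by
  simp [rieszMean, Nat.floor_eq_zero.mpr hx]

theorem sum_Icc_zero_eq_sum_Ioc {c : ℕ → ℝ} (hc : c 0 = 0) (n : ℕ) :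
    ∑ k ∈ Icc 0 n, c k = ∑ k ∈ Ioc 0 n, c k := by
  rw [Icc_eq_cons_Ioc n.zero_le, sum_cons, hc, zero_add]

theorem continuousOn_inv_sq_mul {g : ℝ → ℝ} {x z : ℝ} (hx : 0 < x)
    (hg : ContinuousOn g (Set.Icc x z)) :
    ContinuousOn (fun t ↦ (t ^ 2)⁻¹ * g t) (Set.Icc x z) :=
  ContinuousOn.mul (ContinuousOn.inv₀ (by fun_prop) fun _ ht ↦ pow_ne_zero _ (hx.trans_le ht.1).ne')
    hg

theorem rieszMean_sub_rieszMean {c : ℕ → ℝ} (hc : c 0 = 0) {x z : ℝ} (hx : 0 < x) (hz : x ≤ z) :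
    rieszMean c z - rieszMean c x = ∫ t in x..z, (t ^ 2)⁻¹ * ∑ k ∈ Icc 0 ⌊t⌋₊, c k := by
  have hsplit (y : ℝ) : rieszMean c y =
      ∑ k ∈ Ioc 0 ⌊y⌋₊, (k : ℝ)⁻¹ * c k - y⁻¹ * ∑ k ∈ Icc 0 ⌊y⌋₊, c k := by
    rw [sum_Icc_zero_eq_sum_Ioc hc, rieszMean, mul_sum, ← sum_sub_distrib]
    exact sum_congr rfl fun k _ ↦ by ring
  have habel := sum_mul_eq_sub_sub_integral_mul (f := fun t : ℝ ↦ t⁻¹) c hx.le hz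
    (fun t ht ↦ differentiableAt_inv (hx.trans_le ht.1).ne') (by
      rw [deriv_inv']
      simpa using (continuousOn_inv_sq_mul hx (continuousOn_const (c := 1))).neg.integrableOn_Icc)
  have hIoc := sum_Ioc_consecutive (fun k ↦ (k : ℝ)⁻¹ * c k) (Nat.zero_le _)
    (Nat.floor_le_floor hz)
  simp only [deriv_inv', neg_mul, integral_neg] at habel
  rw [intervalIntegral.integral_of_le hz, hsplit, hsplit]
  linarith

theorem log_factorial_le {n : ℕ} (hn : n ≠ 0) :
    log n.factorial ≤ n * log n - n + log n / 2 + 1 := by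
  obtain ⟨m, rfl⟩ := Nat.exists_eq_succ_of_ne_zero hn
  have h := Stirling.log_stirlingSeq'_antitone (Nat.zero_le m)
  simp only [Function.comp_apply, Stirling.log_stirlingSeq_formula] at h
  rw [log_mul two_ne_zero (by positivity), log_div (by positivity) (by positivity)] at h
  norm_num at h
  push_cast at h ⊢
  linarith

theorem mul_log_sub_self_le {a b : ℝ} (ha : 1 ≤ a) (hab : a ≤ b) :
    a * log a - a ≤ b * log b - b := by
  have hb : 0 < b := by linarith
  have hlog : log a - log b ≤ a / b - 1 := by
    rw [← log_div (by positivity) hb.ne']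
    exact log_le_sub_one_of_pos (by positivity)
  have hmul : b * (log a - log b) ≤ a - b := by
    calc b * (log a - log b) ≤ b * (a / b - 1) := by gcongr
      _ = a - b := by field_simp
  have := mul_le_mul_of_nonneg_right hab (log_nonneg ha)
  linarith

theorem abs_log_factorial_floor_sub_le {u : ℝ} (hu : 1 ≤ u) :
    |log (⌊u⌋₊.factorial) - (u * log u - u)| ≤ log u + 1 := by
  have hone : 1 ≤ ⌊u⌋₊ := (Nat.one_le_floor_iff _).mpr hu
  have hle : (⌊u⌋₊ : ℝ) ≤ u := Nat.floor_le (by linarith)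
  have hlt : u < ⌊u⌋₊ + 1 := Nat.lt_floor_add_one u
  generalize ⌊u⌋₊ = n at *
  have hn : (1 : ℝ) ≤ n := mod_cast hone
  have hlower := Stirling.le_log_factorial_stirling n.succ_ne_zero
  rw [Nat.factorial_succ, Nat.cast_mul, Nat.cast_succ,
    log_mul (x := n + 1) (by positivity) (by positivity)] at hlower
  have hupper := log_factorial_le (n := n) (by lia)
  have hlog : log n ≤ log u := log_le_log (by linarith) hle
  have hlog_succ : log (n + 1) ≤ log u + log 2 := by
    rw [← log_mul (by positivity) (by positivity)]
    exact log_le_log (by positivity) (by linarith)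
  have hlog_two_pi : 0 ≤ log (2 * π) := log_nonneg (by linarith [pi_gt_three])
  have hmono := mul_log_sub_self_le hn hle
  have hmono_succ := mul_log_sub_self_le hu hlt.le
  have := log_two_lt_d9
  have := log_nonneg hu
  rw [abs_le]
  constructor <;> linarith

theorem sum_Icc_log (n : ℕ) : ∑ k ∈ Icc 0 n, log k = log n.factorial := by
  induction n with
  | zero => simp
  | succ n ih =>
    rw [sum_Icc_succ_top (by lia), ih, Nat.factorial_succ, Nat.cast_mul,
      log_mul (by positivity) (by positivity), add_comm]

theorem hasDerivAt_log_sq_div_two_sub_log {t : ℝ} (ht : t ≠ 0) :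
    HasDerivAt (fun t ↦ log t ^ 2 / 2 - log t) ((t ^ 2)⁻¹ * (t * log t - t)) t := by
  convert! (((hasDerivAt_log ht).pow 2).div_const 2).sub (hasDerivAt_log ht) using 1
  field_simp
  push_cast
  ring

theorem hasDerivAt_neg_log_add_two_div {t : ℝ} (ht : t ≠ 0) :
    HasDerivAt (fun t ↦ -((log t + 2) / t)) ((t ^ 2)⁻¹ * (log t + 1)) t := by
  convert! (((hasDerivAt_log ht).add_const 2).div (hasDerivAt_id t) ht).neg using 1
  simp only [id]
  field_simp
  ring

theorem abs_rieszMean_log_sub_le {x z : ℝ} (hx : 1 ≤ x) (hz : x ≤ z) :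
    |rieszMean (fun k ↦ log k) z - rieszMean (fun k ↦ log k) x -
      ((log z ^ 2 / 2 - log z) - (log x ^ 2 / 2 - log x))| ≤ (log x + 2) / x := by
  have hx₀ : 0 < x := by linarith
  have hne {t : ℝ} (ht : t ∈ Set.uIcc x z) : t ≠ 0 := by
    rw [Set.uIcc_of_le hz] at ht
    exact (hx₀.trans_le ht.1).ne'
  have hcont_log : ContinuousOn log (Set.Icc x z) :=
    continuousOn_log.mono fun t ht ↦ (hx₀.trans_le ht.1).ne'
  have hintegrable {g : ℝ → ℝ} (hg : ContinuousOn g (Set.Icc x z)) :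
      IntervalIntegrable (fun t ↦ (t ^ 2)⁻¹ * g t) volume x z :=
    (continuousOn_inv_sq_mul hx₀ hg).intervalIntegrable_of_Icc hz
  have hintegrable_main : IntervalIntegrable (fun t ↦ (t ^ 2)⁻¹ * (t * log t - t)) volume x z :=
    hintegrable ((continuousOn_id.mul hcont_log).sub continuousOn_id)
  have hintegrable_error : IntervalIntegrable (fun t ↦ (t ^ 2)⁻¹ * (log t + 1)) volume x z :=
    hintegrable (hcont_log.add continuousOn_const)
  have hintegrable_sum : IntervalIntegrable
      (fun t ↦ (t ^ 2)⁻¹ * ∑ k ∈ Icc 0 ⌊t⌋₊, log (k : ℝ)) volume x z := by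
    rw [intervalIntegrable_iff_integrableOn_Icc_of_le hz]
    exact integrableOn_mul_sum_Icc _ hx₀.le <| ContinuousOn.integrableOn_Icc <| by
      simpa using continuousOn_inv_sq_mul hx₀ (continuousOn_const (c := (1 : ℝ)))
  rw [rieszMean_sub_rieszMean (by simp) hx₀ hz, ← intervalIntegral.integral_eq_sub_of_hasDerivAt
    (fun t ht ↦ hasDerivAt_log_sq_div_two_sub_log (hne ht)) hintegrable_main,
    ← intervalIntegral.integral_sub hintegrable_sum hintegrable_main]
  calc |∫ t in x..z, ((t ^ 2)⁻¹ * ∑ k ∈ Icc 0 ⌊t⌋₊, log (k : ℝ) -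
          (t ^ 2)⁻¹ * (t * log t - t))|
      ≤ ∫ t in x..z, (t ^ 2)⁻¹ * (log t + 1) := by
        rw [← norm_eq_abs]
        refine intervalIntegral.norm_integral_le_of_norm_le hz (.of_forall fun t ht ↦ ?_)
          hintegrable_error
        rw [← mul_sub, norm_mul, norm_of_nonneg (by positivity), sum_Icc_log]
        gcongr
        exact abs_log_factorial_floor_sub_le (hx.trans ht.1.le)
    _ = -((log z + 2) / z) - -((log x + 2) / x) :=
        intervalIntegral.integral_eq_sub_of_hasDerivAt
          (fun t ht ↦ hasDerivAt_neg_log_add_two_div (hne ht)) hintegrable_error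
    _ ≤ (log x + 2) / x := by
        have hz₀ : 0 < z := by linarith
        have := log_nonneg (hx.trans hz)
        have : 0 ≤ (log z + 2) / z := by positivity
        linarith

theorem sum_Ioc_sum_divisors_mul (f h : ℕ → ℝ) (N : ℕ) :
    ∑ k ∈ Ioc 0 N, (∑ d ∈ k.divisors, f d) * h k =
      ∑ n ∈ Ioc 0 N, f n * ∑ m ∈ Ioc 0 (N / n), h (n * m) := by
  calc ∑ k ∈ Ioc 0 N, (∑ d ∈ k.divisors, f d) * h k
      = ∑ k ∈ Ioc 0 N, ∑ x ∈ Ioc 0 N ×ˢ Ioc 0 N with x.1 * x.2 = k, f x.1 * h (x.1 * x.2) := by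
        refine sum_congr rfl fun k hk ↦ ?_
        rw [← Nat.sum_divisorsAntidiagonal (fun d _ ↦ f d), sum_mul,
          Nat.divisorsAntidiagonal_eq_prod_filter_of_le (mem_Ioc.mp hk).1.ne' (mem_Ioc.mp hk).2]
        exact sum_congr rfl fun x hx ↦ by rw [(mem_filter.mp hx).2]
    _ = ∑ x ∈ Ioc 0 N ×ˢ Ioc 0 N with x.1 * x.2 ≤ N, f x.1 * h (x.1 * x.2) := by
        simp_rw [sum_filter]
        rw [sum_comm]
        exact sum_congr rfl fun _ _ ↦ by simp_all
    _ = ∑ n ∈ Ioc 0 N, f n * ∑ m ∈ Ioc 0 (N / n), h (n * m) := by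
        rw [sum_filter, sum_product]
        refine sum_congr rfl fun n hn ↦ ?_
        rw [mul_sum, ← sum_filter]
        refine sum_congr (ext fun m ↦ ?_) fun _ _ ↦ rfl
        have hn₀ := (mem_Ioc.mp hn).1
        simp only [mem_filter, mem_Ioc, Nat.le_div_iff_mul_le hn₀, mul_comm n]
        exact ⟨fun h ↦ ⟨h.1.1, h.2⟩,
          fun h ↦ ⟨⟨h.1, (Nat.le_mul_of_pos_right m hn₀).trans h.2⟩, h.2⟩⟩

theorem rieszMean_sum_divisors (f : ℕ → ℝ) (x : ℝ) :
    rieszMean (fun k ↦ ∑ d ∈ k.divisors, f d) x =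
      ∑ n ∈ Ioc 0 ⌊x⌋₊, f n / n * rieszMean 1 (x / n) := by
  rw [rieszMean, sum_Ioc_sum_divisors_mul]
  refine sum_congr rfl fun n hn ↦ ?_
  have hn₀ : (n : ℝ) ≠ 0 := Nat.cast_ne_zero.mpr (mem_Ioc.mp hn).1.ne'
  rw [rieszMean, Nat.floor_div_natCast, mul_sum, mul_sum]
  refine sum_congr rfl fun m _ ↦ ?_
  push_cast
  simp only [Pi.one_apply, one_mul, mul_inv, inv_div]
  field_simp

theorem sum_mul_rieszMean_one_div_eq {x : ℝ} (hx : 0 ≤ x) (f : ℕ → ℝ) {N : ℕ} (hN : ⌊x⌋₊ ≤ N) :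
    ∑ n ∈ Ioc 0 ⌊x⌋₊, f n * rieszMean 1 (x / n) = ∑ n ∈ Ioc 0 N, f n * rieszMean 1 (x / n) := by
  refine sum_subset (Ioc_subset_Ioc_right hN) fun n hn hn' ↦ ?_
  have hlt : x < n := (Nat.floor_lt hx).mp (by simp only [mem_Ioc] at hn hn'; lia)
  rw [rieszMean_eq_zero_of_lt_one _ ((div_lt_one (hx.trans_lt hlt)).mpr hlt), mul_zero]

theorem rieszMean_log {x : ℝ} (hx : 0 ≤ x) {N : ℕ} (hN : ⌊x⌋₊ ≤ N) :
    rieszMean (fun k ↦ log k) x = ∑ n ∈ Ioc 0 N, Λ n / n * rieszMean 1 (x / n) := by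
  simp_rw [← ArithmeticFunction.vonMangoldt_sum]
  rw [rieszMean_sum_divisors, sum_mul_rieszMean_one_div_eq hx (fun n ↦ Λ n / n) hN]

section Sieve

variable {D : ℕ} {κ : ℕ → ℝ} {x : ℝ}

theorem sum_mul_rieszMean_log (hx : 0 ≤ x) :
    ∑ d ∈ Icc 1 D, κ d * rieszMean (fun k ↦ log k) (x / d) =
      ∑ n ∈ Ioc 0 ⌊x⌋₊, Λ n / n * ∑ d ∈ Icc 1 D, κ d * rieszMean 1 (x / n / d) := by
  simp_rw [mul_sum]
  rw [sum_comm]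
  refine sum_congr rfl fun d hd ↦ ?_
  have hd₁ : (1 : ℝ) ≤ d := mod_cast (mem_Icc.mp hd).1
  rw [rieszMean_log (by positivity) (Nat.floor_le_floor (div_le_self hx hd₁)), mul_sum]
  refine sum_congr rfl fun n _ ↦ ?_
  rw [div_right_comm]
  ring

/-- The sum is `-∑ κ_d (R(x) - R(x/d))` since `∑ κ_d = 0`, so each term is a difference of the
kind estimated in `abs_rieszMean_log_sub_le`. -/
theorem abs_sum_mul_rieszMean_log_sub_le (hκ : ∑ d ∈ Icc 1 D, κ d = 0) (hx : D ≤ x) (hx₁ : 1 ≤ x) :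
    |∑ d ∈ Icc 1 D, κ d * rieszMean (fun k ↦ log k) (x / d) -
      ((-∑ d ∈ Icc 1 D, κ d * log d) * (log x - 1) + (∑ d ∈ Icc 1 D, κ d * log d ^ 2) / 2)| ≤
      (∑ d ∈ Icc 1 D, |κ d| * d) * ((log x + 2) / x) := by
  set R : ℝ → ℝ := rieszMean fun k ↦ log k
  set M : ℝ → ℝ := fun y ↦ log y ^ 2 / 2 - log y with hM
  have hx₀ : 0 < x := by linarith
  have hexpand : ∀ d ∈ Icc 1 D, -κ d * (R x - R (x / d) - (M x - M (x / d))) =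
      κ d * R (x / d) + κ d * log d * (log x - 1) - κ d * log d ^ 2 / 2 - κ d * R x := by
    intro d hd
    have hd₀ : (d : ℝ) ≠ 0 := Nat.cast_ne_zero.mpr (Nat.one_le_iff_ne_zero.mp (mem_Icc.mp hd).1)
    simp only [hM]
    rw [log_div hx₀.ne' hd₀]
    ring
  calc _ = |∑ d ∈ Icc 1 D, -κ d * (R x - R (x / d) - (M x - M (x / d)))| := by
        rw [sum_congr rfl hexpand, sum_sub_distrib, sum_sub_distrib, sum_add_distrib, ← sum_mul,
          ← sum_mul, ← sum_div, hκ]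
        ring_nf
    _ ≤ ∑ d ∈ Icc 1 D, |κ d| * d * ((log x + 2) / x) := by
        refine (abs_sum_le_sum_abs _ _).trans (sum_le_sum fun d hd ↦ ?_)
        have hd₁ : (1 : ℝ) ≤ d := mod_cast (mem_Icc.mp hd).1
        have hdx : (d : ℝ) ≤ x := le_trans (mod_cast (mem_Icc.mp hd).2) hx
        have hone_le : 1 ≤ x / d := (one_le_div (by linarith)).mpr hdx
        have hle : x / d ≤ x := div_le_self hx₀.le hd₁
        rw [abs_mul, abs_neg, mul_assoc]
        gcongr
        calc _ ≤ (log (x / d) + 2) / (x / d) := abs_rieszMean_log_sub_le hone_le hle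
          _ ≤ (log x + 2) / (x / d) := by gcongr
          _ = d * ((log x + 2) / x) := by field_simp
    _ = _ := by rw [sum_mul]

theorem mul_rieszMean_vonMangoldt_le {c : ℝ} (hc : -∑ d ∈ Icc 1 D, κ d * log d = c)
    (hκ : ∑ d ∈ Icc 1 D, κ d = 0)
    (hminorant : ∀ t, 1 ≤ t → c * (1 - t⁻¹) ≤ ∑ d ∈ Icc 1 D, κ d * rieszMean 1 (t / d))
    (hx : D ≤ x) (hx₁ : 1 ≤ x) :
    c * rieszMean (fun n ↦ Λ n) x ≤ c * (log x - 1) + (∑ d ∈ Icc 1 D, κ d * log d ^ 2) / 2 +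
      (∑ d ∈ Icc 1 D, |κ d| * d) * ((log x + 2) / x) := by
  have hmain := (abs_le.mp (abs_sum_mul_rieszMean_log_sub_le hκ hx hx₁)).2
  suffices c * rieszMean (fun n ↦ Λ n) x ≤
      ∑ d ∈ Icc 1 D, κ d * rieszMean (fun k ↦ log k) (x / d) by
    rw [hc] at hmain
    linarith
  rw [sum_mul_rieszMean_log (by linarith), rieszMean, mul_sum]
  refine sum_le_sum fun n hn ↦ ?_
  have hn₀ : (0 : ℝ) < n := mod_cast (mem_Ioc.mp hn).1
  have hnx : (n : ℝ) ≤ x := (Nat.le_floor_iff (by linarith)).mp (mem_Ioc.mp hn).2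
  calc c * (Λ n * ((n : ℝ)⁻¹ - x⁻¹)) = Λ n / n * (c * (1 - (x / n)⁻¹)) := by
        rw [inv_div]
        field_simp
    _ ≤ _ := mul_le_mul_of_nonneg_left (hminorant _ ((one_le_div hn₀).mpr hnx))
        (div_nonneg ArithmeticFunction.vonMangoldt_nonneg hn₀.le)

end Sieve

theorem eulerMascheroniConstant_add_log_le_harmonic (n : ℕ) :
    eulerMascheroniConstant + log (n + 1 / 2) ≤ harmonic n := by
  have hanti : Antitone fun n : ℕ ↦ (harmonic n : ℝ) - log (n + 1 / 2) := by
    refine antitone_nat_of_succ_le fun n ↦ ?_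
    have h := le_log_one_add_of_nonneg (x := 1 / ((n : ℝ) + 1 / 2)) (by positivity)
    have hratio : 1 + 1 / ((n : ℝ) + 1 / 2) = ((n : ℝ) + 1 + 1 / 2) / (n + 1 / 2) := by
      field_simp
      ring
    have hinv : 2 * (1 / ((n : ℝ) + 1 / 2)) / (1 / ((n : ℝ) + 1 / 2) + 2) = ((n : ℝ) + 1)⁻¹ := by
      field_simp
      ring
    rw [hratio, hinv, log_div (by positivity) (by positivity)] at h
    rw [harmonic_succ]
    push_cast
    linarith
  have hlim : Tendsto (fun n : ℕ ↦ (harmonic n : ℝ) - log (n + 1 / 2)) atTop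
      (𝓝 eulerMascheroniConstant) := by
    refine tendsto_of_tendsto_of_tendsto_of_le_of_le' tendsto_harmonic_sub_log_add_one
      tendsto_harmonic_sub_log (.of_forall fun n ↦ ?_) ?_
    · gcongr
      norm_num
    · filter_upwards [eventually_gt_atTop 0] with n hn
      gcongr
      norm_num
  linarith [hanti.le_of_tendsto hlim n]

theorem harmonic_le_eulerMascheroniConstant_add_log {n : ℕ} (hn : n ≠ 0) :
    harmonic n ≤ eulerMascheroniConstant + log n + 1 / (2 * n) := by
  have hmono : Monotone fun n : ℕ ↦
      (harmonic (n + 1) : ℝ) - log ((n + 1 : ℕ) : ℝ) - 1 / (2 * ((n + 1 : ℕ) : ℝ)) := by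
    refine monotone_nat_of_le_succ fun n ↦ ?_
    have hlog : 0 ≤ log (((n : ℝ) + 1 + 1) / (n + 1)) :=
      log_nonneg ((one_le_div (by positivity)).mpr (by linarith))
    have hsinh := self_le_sinh_iff.mpr hlog
    have heq : (((n : ℝ) + 1 + 1) / (n + 1) - (((n : ℝ) + 1 + 1) / (n + 1))⁻¹) / 2 =
        ((n : ℝ) + 1 + 1)⁻¹ - 1 / (2 * (n + 1 + 1)) + 1 / (2 * (n + 1)) := by
      field_simp
      ring
    rw [sinh_log (by positivity), log_div (by positivity) (by positivity), heq] at hsinh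
    rw [harmonic_succ (n + 1)]
    push_cast
    linarith
  have hlim : Tendsto (fun n : ℕ ↦ (harmonic (n + 1) : ℝ) - log ((n + 1 : ℕ) : ℝ) -
      1 / (2 * ((n + 1 : ℕ) : ℝ))) atTop (𝓝 (eulerMascheroniConstant - 1 / 2 * 0)) := by
    refine (((tendsto_add_atTop_iff_nat 1).mpr tendsto_harmonic_sub_log).sub
      ((tendsto_one_div_add_atTop_nhds_zero_nat (𝕜 := ℝ)).const_mul (1 / 2))).congr fun n ↦ ?_
    push_cast
    field_simp
  obtain ⟨m, rfl⟩ := Nat.exists_eq_succ_of_ne_zero hn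
  linarith [hmono.ge_of_tendsto hlim m]

theorem rieszMean_one (s : ℝ) : rieszMean 1 s = harmonic ⌊s⌋₊ - ⌊s⌋₊ / s := by
  have heq : Ioc 0 ⌊s⌋₊ = Icc 1 ⌊s⌋₊ := rfl
  simp [rieszMean, harmonic_eq_sum_Icc, div_eq_mul_inv, heq]

theorem abs_rieszMean_one_sub_le {s : ℝ} (hs : 1 < s) :
    |rieszMean 1 s - (log s + eulerMascheroniConstant - 1 + 1 / (2 * s))| ≤
      1 / (2 * s * (s - 1)) := by
  rw [rieszMean_one]
  have hone : 1 ≤ ⌊s⌋₊ := (Nat.one_le_floor_iff _).mpr hs.le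
  have hle : (⌊s⌋₊ : ℝ) ≤ s := Nat.floor_le (by linarith)
  have hlt : s < ⌊s⌋₊ + 1 := Nat.lt_floor_add_one s
  generalize ⌊s⌋₊ = N at *
  have : (1 : ℝ) ≤ N := mod_cast hone
  have hs₀ : 0 < s := by linarith
  have hs₁ : 0 < s - 1 := by linarith
  rw [abs_le]
  constructor
  · have hlog := log_le_sub_one_of_pos (x := s / (N + 1 / 2)) (by positivity)
    rw [log_div hs₀.ne' (by positivity)] at hlog
    have hquad : s / (N + 1 / 2) + (N + 1 / 2) / s - 2 ≤ 1 / (2 * s * (s - 1)) := by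
      calc s / (N + 1 / 2) + (N + 1 / 2) / s - 2
          = (s - (N + 1 / 2)) ^ 2 / (s * (N + 1 / 2)) := by
            field_simp
            ring
        _ ≤ (1 / 4) / (s * (N + 1 / 2)) := by
            gcongr
            nlinarith
        _ ≤ 1 / (2 * s * (s - 1)) := by
            rw [div_le_div_iff₀ (by positivity) (by positivity)]
            nlinarith
    have hhalf : (N + 1 / 2) / s = N / s + 1 / (2 * s) := by
      field_simp
    linarith [eulerMascheroniConstant_add_log_le_harmonic N]
  · have hlog := log_le_sub_one_of_pos (x := N / s) (by positivity)
    rw [log_div (by positivity) hs₀.ne'] at hlog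
    have hinv : 1 / (2 * (N : ℝ)) ≤ 1 / (2 * s) + 1 / (2 * s * (s - 1)) := by
      calc 1 / (2 * (N : ℝ)) ≤ 1 / (2 * (s - 1)) := by
            gcongr
            linarith
        _ = 1 / (2 * s) + 1 / (2 * s * (s - 1)) := by
            field_simp
            ring
    linarith [harmonic_le_eulerMascheroniConstant_add_log (n := N) (by lia)]

theorem sum_mul_rieszMean_one_ge {D : ℕ} {κ : ℕ → ℝ} (hκ : ∑ d ∈ Icc 1 D, κ d = 0) {t : ℝ}
    (ht : D < t) (ht₁ : 1 < t) :
    -∑ d ∈ Icc 1 D, κ d * log d + (∑ d ∈ Icc 1 D, κ d * d) / (2 * t) -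
      (∑ d ∈ Icc 1 D, |κ d| * d ^ 2) / (2 * t * (t - D)) ≤
        ∑ d ∈ Icc 1 D, κ d * rieszMean 1 (t / d) := by
  have ht₀ : 0 < t := by linarith
  have : 0 < t - D := by linarith
  calc _ = ∑ d ∈ Icc 1 D, (κ d * (log t + eulerMascheroniConstant - 1) - κ d * log d +
        κ d * d / (2 * t) - |κ d| * d ^ 2 / (2 * t * (t - D))) := by
        rw [sum_sub_distrib, sum_add_distrib, sum_sub_distrib, ← sum_mul, hκ, ← sum_div, ← sum_div]
        ring
    _ ≤ _ := sum_le_sum fun d hd ↦ ?_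
  have hd₁ : (1 : ℝ) ≤ d := mod_cast (mem_Icc.mp hd).1
  have hdD : (d : ℝ) ≤ D := mod_cast (mem_Icc.mp hd).2
  have hsub : 0 < t - d := by linarith
  have hdiv : 1 < t / d := (one_lt_div (by linarith)).mpr (by linarith)
  have herror : |κ d * (rieszMean 1 (t / d) -
      (log (t / d) + eulerMascheroniConstant - 1 + 1 / (2 * (t / d))))| ≤
      |κ d| * d ^ 2 / (2 * t * (t - D)) := by
    rw [abs_mul, mul_div_assoc]
    gcongr
    calc _ ≤ 1 / (2 * (t / d) * (t / d - 1)) := abs_rieszMean_one_sub_le hdiv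
      _ = (d : ℝ) ^ 2 / (2 * t * (t - d)) := by field_simp
      _ ≤ (d : ℝ) ^ 2 / (2 * t * (t - D)) := by gcongr
  have hhalf : 1 / (2 * (t / d)) = d / (2 * t) := by field_simp
  rw [hhalf, log_div ht₀.ne' (by positivity)] at herror
  have := (abs_le.mp herror).1
  linear_combination this

/-- The Dirichlet convolution of `d ↦ κ d * d`, restricted to `1 ≤ d ≤ D`, with the constant `1`. -/
def divisorWeight (κ : ℕ → ℤ) (D n : ℕ) : ℤ := ∑ d ∈ Icc 1 D, if d ∣ n then κ d * d else 0

theorem sum_mul_rieszMean_one_eq (κ : ℕ → ℤ) (D : ℕ) {t : ℝ} (ht : 0 ≤ t) :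
    ∑ d ∈ Icc 1 D, (κ d : ℝ) * rieszMean 1 (t / d) = rieszMean (fun n ↦ divisorWeight κ D n) t := by
  set g : ℕ → ℝ := fun d ↦ if d ∈ Icc 1 D then κ d * d else 0 with hg
  have hdivisors : rieszMean (fun n ↦ divisorWeight κ D n) t =
      rieszMean (fun n ↦ ∑ d ∈ n.divisors, g d) t := by
    refine sum_congr rfl fun n hn ↦ ?_
    have hn₀ : n ≠ 0 := (mem_Ioc.mp hn).1.ne'
    simp only [divisorWeight, hg, Int.cast_sum, Int.cast_mul, Int.cast_natCast, ← sum_filter]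
    congr 2
    ext d
    simp [hn₀, and_comm]
  rw [hdivisors, rieszMean_sum_divisors,
    sum_mul_rieszMean_one_div_eq ht (fun n ↦ g n / n) (le_max_left ⌊t⌋₊ D)]
  refine sum_subset_zero_on_sdiff
    (fun d hd ↦ by simp only [mem_Icc, mem_Ioc] at hd ⊢; lia) (fun d hd ↦ ?_) fun d hd ↦ ?_
  · have : d ∉ Icc 1 D := (mem_sdiff.mp hd).2
    simp only [hg, if_neg this, zero_div, zero_mul]
  · have hd₀ : (d : ℝ) ≠ 0 := Nat.cast_ne_zero.mpr (Nat.one_le_iff_ne_zero.mp (mem_Icc.mp hd).1)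
    simp only [hg, if_pos hd]
    rw [mul_div_cancel_right₀ _ hd₀]

/-- Given `S ≤ 10 ^ 12 * ∑ k ≤ n, c k / k` and `C = ∑ k ≤ n, c k`, this verifies
`Q * (t - 1) ≤ 10 ^ 12 * t * rieszMean c t` for `n + 1 ≤ t ≤ n + 1 + f`. Since `t * rieszMean c t`
is affine between consecutive integers, it suffices to compare the two sides at integers. -/
def affinePiecesCheck (c : ℕ → ℤ) (Q : ℤ) : ℕ → ℕ → ℤ → ℤ → Bool
  | 0, _, _, _ => true
  | f + 1, n, S, C =>
    let S' := S + c (n + 1) * 10 ^ 12 / ((n + 1 : ℕ) : ℤ)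
    let C' := C + c (n + 1)
    decide (Q * n ≤ (n + 1) * S' - 10 ^ 12 * C') &&
      (decide (Q * (n + 1) ≤ (n + 2) * S' - 10 ^ 12 * C') && affinePiecesCheck c Q f (n + 1) S' C')

theorem le_mul_rieszMean_of_affinePiecesCheck {c : ℕ → ℤ} {Q : ℤ} {f n : ℕ} {S C : ℤ}
    (hS : (S : ℝ) ≤ 10 ^ 12 * ∑ k ∈ Ioc 0 n, (c k : ℝ) * (k : ℝ)⁻¹)
    (hC : (C : ℝ) = ∑ k ∈ Ioc 0 n, (c k : ℝ)) (h : affinePiecesCheck c Q f n S C = true) {t : ℝ}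
    (hnt : n + 1 ≤ t) (htf : t < n + 1 + f) :
    Q * (t - 1) ≤ 10 ^ 12 * (t * rieszMean (fun k ↦ c k) t) := by
  induction f generalizing n S C with
  | zero =>
    push_cast at htf
    linarith
  | succ f ih =>
    simp only [affinePiecesCheck, Bool.and_eq_true, decide_eq_true_eq] at h
    obtain ⟨hleft, hright, hrest⟩ := h
    set S' := S + c (n + 1) * 10 ^ 12 / ((n + 1 : ℕ) : ℤ) with hS'_def
    have hdiv : ((c (n + 1) * 10 ^ 12 / ((n + 1 : ℕ) : ℤ) : ℤ) : ℝ) ≤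
        10 ^ 12 * (c (n + 1) * ((n + 1 : ℕ) : ℝ)⁻¹) := by
      rw [← mul_assoc, ← div_eq_mul_inv, le_div_iff₀ (by positivity), mul_comm (10 ^ 12 : ℝ)]
      exact_mod_cast Int.ediv_mul_le _ (by lia : ((n + 1 : ℕ) : ℤ) ≠ 0)
    have hS' : (S' : ℝ) ≤ 10 ^ 12 * ∑ k ∈ Ioc 0 (n + 1), (c k : ℝ) * (k : ℝ)⁻¹ := by
      rw [sum_Ioc_succ_top n.zero_le, hS'_def, Int.cast_add, mul_add]
      exact add_le_add hS hdiv
    have hC' : ((C + c (n + 1) : ℤ) : ℝ) = ∑ k ∈ Ioc 0 (n + 1), (c k : ℝ) := by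
      rw [sum_Ioc_succ_top n.zero_le, Int.cast_add, hC]
    rcases lt_or_ge t (n + 1 + 1) with hpiece | hbeyond
    · have hfloor : ⌊t⌋₊ = n + 1 :=
        (Nat.floor_eq_iff (by linarith)).mpr ⟨mod_cast hnt, mod_cast hpiece⟩
      have hleft' : (Q : ℝ) * n ≤ (n + 1) * S' - 10 ^ 12 * ((C + c (n + 1) : ℤ) : ℝ) := by
        exact_mod_cast hleft
      have hright' : (Q : ℝ) * (n + 1) ≤ (n + 2) * S' - 10 ^ 12 * ((C + c (n + 1) : ℤ) : ℝ) := by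
        exact_mod_cast hright
      rw [mul_rieszMean _ (by linarith), hfloor, ← hC']
      have := mul_le_mul_of_nonneg_left hleft' (show 0 ≤ (n : ℝ) + 2 - t by linarith)
      have := mul_le_mul_of_nonneg_left hright' (show 0 ≤ t - (n + 1) by linarith)
      have := mul_le_mul_of_nonneg_left hS' (show 0 ≤ t by linarith)
      linarith
    · refine ih hS' hC' hrest (mod_cast hbeyond) ?_
      push_cast at htf ⊢
      linarith

theorem mul_one_sub_inv_le_sum_mul_rieszMean_one {κ : ℕ → ℤ} {D N : ℕ} {Q : ℤ} {a : ℝ}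
    (hκ : ∑ d ∈ Icc 1 D, (κ d : ℝ) = 0) (ha : -∑ d ∈ Icc 1 D, (κ d : ℝ) * log d = a)
    (haQ : 10 ^ 12 * a ≤ Q) (hcheck : affinePiecesCheck (divisorWeight κ D) Q N 0 0 0 = true)
    (htail : (∑ d ∈ Icc 1 D, |(κ d : ℝ)| * d ^ 2) / (N - D) ≤
      2 * a + ∑ d ∈ Icc 1 D, (κ d : ℝ) * d) (hDN : D < N) {t : ℝ} (ht : 1 ≤ t) :
    a * (1 - t⁻¹) ≤ ∑ d ∈ Icc 1 D, (κ d : ℝ) * rieszMean 1 (t / d) := by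
  have ht₀ : 0 < t := by linarith
  rcases lt_or_ge t (1 + N) with hsmall | hlarge
  · have hcheck' := le_mul_rieszMean_of_affinePiecesCheck (by simp) (by simp) hcheck
      (t := t) (by simpa using ht) (by simpa using hsmall)
    rw [sum_mul_rieszMean_one_eq κ D ht₀.le, ← mul_le_mul_iff_right₀ ht₀]
    have hexpand : t * (a * (1 - t⁻¹)) = a * (t - 1) := by field_simp
    have := mul_le_mul_of_nonneg_right haQ (show 0 ≤ t - 1 by linarith)
    rw [hexpand]
    linarith
  · have hDN' : (D : ℝ) < N := mod_cast hDN
    have hasymp := sum_mul_rieszMean_one_ge hκ (t := t) (by linarith) (by linarith)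
    have htail_t : (∑ d ∈ Icc 1 D, |(κ d : ℝ)| * d ^ 2) / (t - D) ≤
        2 * a + ∑ d ∈ Icc 1 D, (κ d : ℝ) * d :=
      le_trans (div_le_div_of_nonneg_left (by positivity) (by linarith) (by linarith)) htail
    have hscaled := div_le_div_of_nonneg_right htail_t (show 0 ≤ 2 * t by linarith)
    rw [div_div, mul_comm (t - (D : ℝ)), add_div, mul_div_mul_left _ _ two_ne_zero] at hscaled
    rw [ha] at hasymp
    rw [mul_sub, mul_one, ← div_eq_mul_inv]
    linarith

theorem abs_log_sub_log_sub_le {a b : ℝ} (hb : 0 < b) (hab : b ≤ a) :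
    |log a - log b - (a - b) / b| ≤ ((a - b) / b) ^ 2 := by
  have ha : 0 < a := by linarith
  have hupper := log_le_sub_one_of_pos (div_pos ha hb)
  have hlower := one_sub_inv_le_log_of_pos (div_pos ha hb)
  rw [log_div ha.ne' hb.ne'] at hupper hlower
  rw [inv_div] at hlower
  have hratio : a / b - 1 = (a - b) / b := by field_simp
  have hinv : (a - b) / b - ((a - b) / b) ^ 2 ≤ 1 - b / a := by
    rw [← sub_nonneg]
    have : 1 - b / a - ((a - b) / b - ((a - b) / b) ^ 2) = (a - b) ^ 3 / (a * b ^ 2) := by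
      field_simp
      ring
    rw [this]
    have := sub_nonneg.mpr hab
    positivity
  rw [abs_le]
  constructor <;> linarith [sq_nonneg ((a - b) / b)]

theorem abs_log_seven_sub_le : |log 7 - 1.945910149| ≤ 7 / 10 ^ 8 := by
  have hlog2401 : log 2401 = 4 * log 7 := by
    rw [show (2401 : ℝ) = 7 ^ 4 by norm_num, log_pow]
    norm_num
  have hlog2400 : log 2400 = 5 * log 2 + log 3 + 2 * log 5 := by
    rw [show (2400 : ℝ) = 2 ^ 5 * 3 * 5 ^ 2 by norm_num, log_mul (by norm_num) (by norm_num),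
      log_mul (by norm_num) (by norm_num), log_pow, log_pow]
    norm_num
  have hnear := abs_log_sub_log_sub_le (show (0 : ℝ) < 2400 by norm_num)
    (show (2400 : ℝ) ≤ 2401 by norm_num)
  rw [hlog2401, hlog2400] at hnear
  norm_num at hnear
  have := log_two_gt_d9
  have := log_two_lt_d9
  have := log_three_gt_d9
  have := log_three_lt_d9
  have := log_five_gt_d9
  have := log_five_lt_d9
  obtain ⟨_, _⟩ := abs_le.mp hnear
  rw [abs_le]
  constructor <;> linarith

theorem abs_log_seven_smooth_sub_le (a b c e : ℕ) :
    |log ((2 : ℝ) ^ a * 3 ^ b * 5 ^ c * 7 ^ e) -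
      ((a : ℝ) * 693147181 + b * 1098612289 + c * 1609437912 + e * 1945910149) / 10 ^ 9| ≤
    ((a : ℝ) + b + c) / 10 ^ 9 + e * (7 / 10 ^ 8) := by
  have hlog : log ((2 : ℝ) ^ a * 3 ^ b * 5 ^ c * 7 ^ e) =
      a * log 2 + b * log 3 + c * log 5 + e * log 7 := by
    rw [log_mul (by positivity) (by positivity), log_mul (by positivity) (by positivity),
      log_mul (by positivity) (by positivity), log_pow, log_pow, log_pow, log_pow]
  have htwo : |log 2 - 0.693147181| ≤ 1 / 10 ^ 9 :=
    abs_le.mpr ⟨by linarith [log_two_gt_d9], by linarith [log_two_lt_d9]⟩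
  have hthree : |log 3 - 1.098612289| ≤ 1 / 10 ^ 9 :=
    abs_le.mpr ⟨by linarith [log_three_gt_d9], by linarith [log_three_lt_d9]⟩
  have hfive : |log 5 - 1.609437912| ≤ 1 / 10 ^ 9 :=
    abs_le.mpr ⟨by linarith [log_five_gt_d9], by linarith [log_five_lt_d9]⟩
  have hscaled (n : ℕ) {u v : ℝ} (h : |u| ≤ v) : -(n * v) ≤ n * u ∧ n * u ≤ n * v :=
    abs_le.mp ((abs_mul _ _).trans_le (by simpa using mul_le_mul_of_nonneg_left h n.cast_nonneg))
  obtain ⟨_, _⟩ := hscaled a htwo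
  obtain ⟨_, _⟩ := hscaled b hthree
  obtain ⟨_, _⟩ := hscaled c hfive
  obtain ⟨_, _⟩ := hscaled e abs_log_seven_sub_le
  rw [hlog, abs_le]
  constructor <;> linarith

theorem abs_sum_mul_sub_sum_mul_le {κ : ℕ → ℤ} {s : Finset ℕ} {g r : ℕ → ℝ} {ε : ℝ}
    (h : ∀ d ∈ s, κ d ≠ 0 → |g d - r d| ≤ ε) :
    |∑ d ∈ s, (κ d : ℝ) * g d - ∑ d ∈ s, (κ d : ℝ) * r d| ≤ (∑ d ∈ s, |(κ d : ℝ)|) * ε := by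
  rw [← sum_sub_distrib, sum_mul]
  refine (abs_sum_le_sum_abs _ _).trans (sum_le_sum fun d hd ↦ ?_)
  rcases eq_or_ne (κ d) 0 with hzero | hne
  · simp [hzero]
  · rw [← mul_sub, abs_mul]
    exact mul_le_mul_of_nonneg_left (h d hd hne) (abs_nonneg _)

/-- `10 ^ 9 * log d`, rounded, for those `d` that carry a sieve weight. -/
def logApprox : ℕ → ℤ
  | 2 => 693147181 | 3 => 1098612289 | 4 => 1386294362 | 5 => 1609437912 | 6 => 1791759470
  | 7 => 1945910149 | 8 => 2079441543 | 9 => 2197224578 | 10 => 2302585093 | 12 => 2484906651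
  | 14 => 2639057330 | 15 => 2708050201 | 16 => 2772588724 | 18 => 2890371759
  | 20 => 2995732274 | 21 => 3044522438 | 24 => 3178053832 | _ => 0

/-- The sieve weights for the upper bound of the Riesz mean of `Λ`, found by linear programming. -/
def upperSieveWeight : ℕ → ℤ
  | 1 => 10002 | 2 => -5003 | 3 => -3334 | 4 => 1 | 5 => -1916 | 6 => 1500 | 7 => -1344
  | 8 => 167 | 9 => 228 | 10 => -1 | 12 => -453 | 14 => 339 | 16 => -279 | 18 => -18
  | 21 => 15 | 24 => 96 | _ => 0

/-- The sieve weights for the lower bound of the Riesz mean of `Λ`, found by linear programming. -/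
def lowerSieveWeight : ℕ → ℤ
  | 1 => -9998 | 2 => 4997 | 3 => 3333 | 4 => 1 | 5 => 2000 | 6 => -1254 | 7 => 638
  | 8 => 345 | 9 => 33 | 10 => -221 | 12 => 47 | 14 => 203 | 15 => -542 | 16 => 267
  | 18 => 112 | 20 => 18 | 21 => -67 | 24 => 88 | _ => 0

theorem exists_seven_smooth_of_logApprox_ne_zero {d : ℕ} (hd : d ∈ Icc 1 24)
    (h : d = 1 ∨ logApprox d ≠ 0) :
    ∃ a < (5 : ℕ), ∃ b < (3 : ℕ), ∃ c < (2 : ℕ), ∃ e < (2 : ℕ),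
      a + b + c + e ≤ 4 ∧ d = 2 ^ a * 3 ^ b * 5 ^ c * 7 ^ e ∧
      logApprox d = (a : ℤ) * 693147181 + b * 1098612289 + c * 1609437912 + e * 1945910149 := by
  revert d
  decide +kernel

theorem abs_log_sub_logApprox_le {d : ℕ} (hd : d ∈ Icc 1 24) (h : d = 1 ∨ logApprox d ≠ 0) :
    |log d - logApprox d / 10 ^ 9| ≤ 8 / 10 ^ 8 := by
  obtain ⟨a, -, b, -, c, -, e, he, hsum, hsmooth, happrox⟩ :=
    exists_seven_smooth_of_logApprox_ne_zero hd h
  rw [happrox, hsmooth]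
  push_cast
  refine (abs_log_seven_smooth_sub_le a b c e).trans ?_
  have hsum' : (a + b + c + e : ℝ) ≤ 4 := mod_cast hsum
  have he' : (e : ℝ) ≤ 1 := mod_cast Nat.lt_succ_iff.mp he
  have : (0 : ℝ) ≤ e := e.cast_nonneg
  linarith

theorem abs_log_sq_sub_logApprox_sq_le {d : ℕ} (hd : d ∈ Icc 1 24)
    (h : d = 1 ∨ logApprox d ≠ 0) :
    |log d ^ 2 - (logApprox d / 10 ^ 9) ^ 2| ≤ 64 / 10 ^ 8 := by
  have hone : (1 : ℝ) ≤ d := mod_cast (mem_Icc.mp hd).1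
  have hlog : log d ≤ 3.5 := by
    have : log d ≤ log 24 := log_le_log (by linarith) (mod_cast (mem_Icc.mp hd).2)
    have hlog24 : log 24 = 3 * log 2 + log 3 := by
      rw [show (24 : ℝ) = 2 ^ 3 * 3 by norm_num, log_mul (by norm_num) (by norm_num), log_pow]
      norm_num
    linarith [log_two_lt_d9, log_three_lt_d9]
  have hnear := abs_log_sub_logApprox_le hd h
  obtain ⟨_, _⟩ := abs_le.mp hnear
  have hsum : |log d + logApprox d / 10 ^ 9| ≤ 8 :=
    abs_le.mpr ⟨by linarith [log_nonneg hone], by linarith⟩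
  rw [sq_sub_sq, abs_mul, mul_comm]
  exact (mul_le_mul hnear hsum (abs_nonneg _) (by norm_num)).trans (by norm_num)

theorem exists_mul_rieszMean_vonMangoldt_le_of_check {κ : ℕ → ℤ} {A B M M₁ M₂ W : ℤ}
    (hκ : ∑ d ∈ Icc 1 24, κ d = 0)
    (hsupport : ∀ d ∈ Icc 1 24, κ d ≠ 0 → d = 1 ∨ logApprox d ≠ 0)
    (hA : -∑ d ∈ Icc 1 24, κ d * logApprox d = A) (hB : ∑ d ∈ Icc 1 24, κ d * logApprox d ^ 2 = B)
    (hM : ∑ d ∈ Icc 1 24, |κ d| = M) (hM₁ : ∑ d ∈ Icc 1 24, |κ d| * d = M₁)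
    (hM₂ : ∑ d ∈ Icc 1 24, |κ d| * (d : ℤ) ^ 2 = M₂) (hW : ∑ d ∈ Icc 1 24, κ d * d = W)
    (hcheck : affinePiecesCheck (divisorWeight κ 24) (10 ^ 3 * A + 10 ^ 5 * M) 1500 0 0 0 = true)
    (htail : 10 ^ 9 * M₂ ≤ 1476 * (2 * A - 160 * M + 10 ^ 9 * W)) :
    ∃ c : ℝ, |c - (A : ℝ) / 10 ^ 9| ≤ (M : ℝ) * (8 / 10 ^ 8) ∧ ∀ x : ℝ, 24 ≤ x →
      c * rieszMean (fun n ↦ Λ n) x ≤ c * (log x - 1) +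
        ((B : ℝ) / 10 ^ 18 + M * (64 / 10 ^ 8)) / 2 + M₁ * ((log x + 2) / x) := by
  have hκ' : ∑ d ∈ Icc 1 24, (κ d : ℝ) = 0 := mod_cast hκ
  have hA' : ∑ d ∈ Icc 1 24, (κ d : ℝ) * (logApprox d / 10 ^ 9) = -((A : ℝ) / 10 ^ 9) := by
    rw [← hA]
    push_cast
    simp only [← mul_div_assoc, ← sum_div, neg_div, neg_neg]
  have hB' : ∑ d ∈ Icc 1 24, (κ d : ℝ) * (logApprox d / 10 ^ 9) ^ 2 = (B : ℝ) / 10 ^ 18 := by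
    rw [← hB]
    push_cast
    simp only [div_pow, ← mul_div_assoc, ← sum_div, ← pow_mul]
  have hM' : ∑ d ∈ Icc 1 24, |(κ d : ℝ)| = M := mod_cast hM
  have hM₁' : ∑ d ∈ Icc 1 24, |(κ d : ℝ)| * d = M₁ := mod_cast hM₁
  have hM₂' : ∑ d ∈ Icc 1 24, |(κ d : ℝ)| * (d : ℝ) ^ 2 = M₂ := mod_cast hM₂
  have hW' : ∑ d ∈ Icc 1 24, (κ d : ℝ) * d = W := mod_cast hW
  have hlog := abs_sum_mul_sub_sum_mul_le (κ := κ) (g := fun d ↦ log d)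
    (r := fun d ↦ logApprox d / 10 ^ 9)
    fun d hd hne ↦ abs_log_sub_logApprox_le hd (hsupport d hd hne)
  have hlog_sq := abs_sum_mul_sub_sum_mul_le (κ := κ) (g := fun d ↦ log d ^ 2)
    (r := fun d ↦ (logApprox d / 10 ^ 9) ^ 2)
    fun d hd hne ↦ abs_log_sq_sub_logApprox_sq_le hd (hsupport d hd hne)
  rw [hA', hM'] at hlog
  rw [hB', hM'] at hlog_sq
  obtain ⟨hlog_ge, hlog_le⟩ := abs_le.mp hlog
  have htail' : (10 ^ 9 * M₂ : ℝ) ≤ 1476 * (2 * A - 160 * M + 10 ^ 9 * W) := mod_cast htail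
  have : (0 : ℝ) ≤ M := hM' ▸ sum_nonneg fun _ _ ↦ abs_nonneg _
  refine ⟨-∑ d ∈ Icc 1 24, (κ d : ℝ) * log d, abs_le.mpr ⟨by linarith, by linarith⟩,
    fun x hx ↦ ?_⟩
  have hsieve := mul_rieszMean_vonMangoldt_le (D := 24) (x := x) rfl hκ'
    (fun t ↦ mul_one_sub_inv_le_sum_mul_rieszMean_one (N := 1500) hκ' rfl
      (by push_cast; linarith) hcheck (by rw [hM₂', hW']; push_cast; linarith) (by lia))
    (mod_cast hx) (by linarith)
  rw [hM₁'] at hsieve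
  linarith [(abs_le.mp hlog_sq).2]

theorem rieszMean_vonMangoldt_le {x : ℝ} (hx : 24 ≤ x) :
    rieszMean (fun n ↦ Λ n) x ≤ log x - 1 - 0.57334 + 7.9 * ((log x + 2) / x) := by
  obtain ⟨c, hc, hsieve⟩ := exists_mul_rieszMean_vonMangoldt_le_of_check (κ := upperSieveWeight)
    (A := 10000458361232) (B := -11467373371829667404766) (M := 24696) (M₁ := 78989)
    (by decide) (by decide) rfl rfl rfl rfl rfl rfl (by decide +kernel) (by decide +kernel)
  replace hsieve := hsieve x hx
  push_cast at hc hsieve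
  obtain ⟨_, _⟩ := abs_le.mp hc
  have : 0 ≤ (log x + 2) / x := by
    have := log_nonneg (show 1 ≤ x by linarith)
    positivity
  refine le_of_mul_le_mul_left ?_ (show 0 < c by linarith)
  nlinarith

theorem le_rieszMean_vonMangoldt {x : ℝ} (hx : 24 ≤ x) :
    log x - 1 - 0.58114 - 7.9 * ((log x + 2) / x) ≤ rieszMean (fun n ↦ Λ n) x := by
  obtain ⟨c, hc, hsieve⟩ := exists_mul_rieszMean_vonMangoldt_le_of_check (κ := lowerSieveWeight)
    (A := -9999629861357) (B := 11622214735058991312741) (M := 24164) (M₁ := 78955)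
    (by decide) (by decide) rfl rfl rfl rfl rfl rfl (by decide +kernel) (by decide +kernel)
  replace hsieve := hsieve x hx
  push_cast at hc hsieve
  obtain ⟨_, _⟩ := abs_le.mp hc
  have : 0 ≤ (log x + 2) / x := by
    have := log_nonneg (show 1 ≤ x by linarith)
    positivity
  refine le_of_mul_le_mul_left ?_ (show 0 < -c by linarith)
  nlinarith

/-- The sum `∑_{0 < n ≤ x} c_n (φ n - φ x)`. Subtracting `φ x` makes it continuous in `x`;
the first Riesz mean is the case `φ t = 1 / t`. -/
noncomputable def cutoffSum (c : ℕ → ℝ) (φ : ℝ → ℝ) (x : ℝ) : ℝ :=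
  ∑ n ∈ Ioc 0 ⌊x⌋₊, c n * (φ n - φ x)

theorem cutoffSum_inv (c : ℕ → ℝ) : cutoffSum c (·⁻¹) = rieszMean c := rfl

theorem cutoffSum_eq_sum_min (c : ℕ → ℝ) (φ : ℝ → ℝ) {t z : ℝ} (ht : 0 ≤ t) (htz : t ≤ z) :
    cutoffSum c φ t = ∑ n ∈ Ioc 0 ⌊z⌋₊, c n * (φ (min n t) - φ t) := by
  have hterm : ∀ n ∈ Ioc 0 ⌊t⌋₊, c n * (φ n - φ t) = c n * (φ (min n t) - φ t) := fun n hn ↦ by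
    rw [min_eq_left ((Nat.le_floor_iff ht).mp (mem_Ioc.mp hn).2)]
  rw [cutoffSum, sum_congr rfl hterm]
  refine sum_subset (Ioc_subset_Ioc_right (Nat.floor_le_floor htz)) fun n hn hnt ↦ ?_
  have htn : ⌊t⌋₊ < n := by simp only [mem_Ioc] at hn hnt; lia
  rw [min_eq_right ((Nat.floor_lt ht).mp htn).le, sub_self, mul_zero]

theorem continuousOn_cutoffSum (c : ℕ → ℝ) {φ : ℝ → ℝ} {y z : ℝ} (hy : 0 ≤ y)
    (hφ : ContinuousOn φ (Set.Icc y z)) : ContinuousOn (cutoffSum c φ) (Set.Icc y z) := by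
  have hmin (n : ℕ) : ContinuousOn (fun t ↦ φ (min n t)) (Set.Icc y z) := by
    rcases le_total (n : ℝ) y with hn | hn
    · exact continuousOn_const.congr fun t ht ↦ by rw [min_eq_left (hn.trans ht.1)]
    · exact hφ.comp (by fun_prop) fun t ht ↦ ⟨le_min hn ht.1, (min_le_right _ _).trans ht.2⟩
  have hsum : ContinuousOn (fun t ↦ ∑ n ∈ Ioc 0 ⌊z⌋₊, c n * (φ (min n t) - φ t)) (Set.Icc y z) :=
    continuousOn_finsetSum _ fun n _ ↦ continuousOn_const.mul ((hmin n).sub hφ)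
  exact hsum.congr fun t ht ↦ cutoffSum_eq_sum_min c φ (hy.trans ht.1) ht.2

theorem hasDerivWithinAt_cutoffSum (c : ℕ → ℝ) {φ : ℝ → ℝ} {φ' x : ℝ} (hx : 0 ≤ x)
    (hφ : HasDerivAt φ φ' x) :
    HasDerivWithinAt (cutoffSum c φ) (-(φ' * ∑ n ∈ Ioc 0 ⌊x⌋₊, c n)) (Set.Ici x) x := by
  have hfrozen : HasDerivAt (fun t ↦ ∑ n ∈ Ioc 0 ⌊x⌋₊, c n * (φ n - φ t))
      (-(φ' * ∑ n ∈ Ioc 0 ⌊x⌋₊, c n)) x := by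
    refine (HasDerivAt.fun_sum fun (n : ℕ) _ ↦
      (hφ.const_sub (φ n)).const_mul (c n)).congr_deriv ?_
    rw [← sum_mul]
    ring
  have hfloor : ∀ᶠ t in 𝓝[≥] x, ⌊t⌋₊ = ⌊x⌋₊ := by
    filter_upwards [nhdsWithin_le_nhds (eventually_lt_nhds (Nat.lt_floor_add_one x)),
      self_mem_nhdsWithin] with t ht hxt
    exact (Nat.floor_eq_iff (hx.trans hxt)).mpr ⟨(Nat.floor_le hx).trans hxt, ht⟩
  exact hfrozen.hasDerivWithinAt.congr_of_eventuallyEq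
    (hfloor.mono fun t ht ↦ by simp only [cutoffSum, ht]) rfl

/-- The sum `∑_{n ≤ x} Λ(n) (1 / (n log n) - 1 / (x log x))`. Up to a small error it is
`-∑_{p ≤ x} log (1 - 1 / p)` with the mean value of the cut-off removed. -/
noncomputable def mertensSum : ℝ → ℝ := cutoffSum (fun n ↦ Λ n) fun t ↦ (t * log t)⁻¹

/-- The weight `w t = 1 / log t + 1 / log² t`, i.e. `-t²` times the derivative of
`1 / (t log t)`: it converts errors in `rieszMean` into errors in `mertensSum`. -/
noncomputable def mertensWeight (t : ℝ) : ℝ := (log t)⁻¹ + (log t ^ 2)⁻¹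

theorem mertensWeight_pos {t : ℝ} (ht : 1 < t) : 0 < mertensWeight t := by
  have : 0 < log t := log_pos ht
  unfold mertensWeight
  positivity

theorem hasDerivAt_inv_mul_log {t : ℝ} (ht : 1 < t) :
    HasDerivAt (fun t ↦ (t * log t)⁻¹) (-(mertensWeight t / t ^ 2)) t := by
  have hlog : log t ≠ 0 := (log_pos ht).ne'
  have ht0 : t ≠ 0 := by positivity
  refine (((hasDerivAt_id t).mul (hasDerivAt_log ht0)).inv (mul_ne_zero ht0 hlog)).congr_deriv ?_
  simp only [id_eq, mertensWeight, Pi.mul_apply]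
  field_simp

theorem hasDerivAt_mertensWeight {t : ℝ} (ht : 1 < t) :
    HasDerivAt mertensWeight (-(1 / (t * log t ^ 2) + 2 / (t * log t ^ 3))) t := by
  have hlog : log t ≠ 0 := (log_pos ht).ne'
  have ht0 : t ≠ 0 := by positivity
  have hderiv := hasDerivAt_log ht0
  refine ((hderiv.inv hlog).add ((hderiv.pow 2).inv (pow_ne_zero 2 hlog))).congr_deriv ?_
  simp only [Pi.pow_apply]
  push_cast
  field_simp
  ring

/-- The function whose monotonicity transfers a lower bound for the Riesz mean of `Λ` into one
for `mertensSum`: the sums over `Λ` cancel in its derivative, leaving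
`-w' (rieszMean - log - a)`. -/
noncomputable def mertensPotential (a t : ℝ) : ℝ :=
  mertensSum t - log (log t) + (log t)⁻¹
    - mertensWeight t * (rieszMean (fun n ↦ Λ n) t - log t - a)

theorem continuousOn_mertensPotential (a : ℝ) {y z : ℝ} (hy : 1 < y) :
    ContinuousOn (mertensPotential a) (Set.Icc y z) := by
  have hlt {t : ℝ} (ht : t ∈ Set.Icc y z) : 1 < t := hy.trans_le ht.1
  have hlog : ContinuousOn log (Set.Icc y z) := continuousOn_log.mono fun t ht ↦
    (zero_lt_one.trans (hlt ht)).ne'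
  have hlog0 : ∀ t ∈ Set.Icc y z, log t ≠ 0 := fun t ht ↦ (log_pos (hlt ht)).ne'
  have hsum : ContinuousOn mertensSum (Set.Icc y z) :=
    continuousOn_cutoffSum _ (by linarith) fun t ht ↦
      (hasDerivAt_inv_mul_log (hlt ht)).continuousAt.continuousWithinAt
  have hmean : ContinuousOn (rieszMean fun n ↦ Λ n) (Set.Icc y z) := by
    rw [← cutoffSum_inv]
    exact continuousOn_cutoffSum _ (by linarith)
      (continuousOn_inv₀.mono fun t ht ↦ (zero_lt_one.trans (hlt ht)).ne')
  have hweight : ContinuousOn mertensWeight (Set.Icc y z) := fun t ht ↦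
    (hasDerivAt_mertensWeight (hlt ht)).continuousAt.continuousWithinAt
  exact ((hsum.sub (hlog.log hlog0)).add (hlog.inv₀ hlog0)).sub
    (hweight.mul ((hmean.sub hlog).sub continuousOn_const))

theorem hasDerivWithinAt_mertensPotential (a : ℝ) {t : ℝ} (ht : 1 < t) :
    HasDerivWithinAt (mertensPotential a)
      ((1 / (t * log t ^ 2) + 2 / (t * log t ^ 3)) * (rieszMean (fun n ↦ Λ n) t - log t - a))
      (Set.Ici t) t := by
  have hlog : log t ≠ 0 := (log_pos ht).ne'
  have ht0 : t ≠ 0 := by positivity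
  have hderiv := hasDerivAt_log ht0
  have hsum := hasDerivWithinAt_cutoffSum (fun n ↦ Λ n) (by linarith) (hasDerivAt_inv_mul_log ht)
  have hmean := hasDerivWithinAt_cutoffSum (fun n ↦ Λ n) (by linarith) (hasDerivAt_inv ht0)
  have hweight := (hasDerivAt_mertensWeight ht).hasDerivWithinAt (s := Set.Ici t)
  refine (((hsum.sub (hderiv.log hlog).hasDerivWithinAt).add
    (hderiv.inv hlog).hasDerivWithinAt).sub
    (hweight.mul ((hmean.sub hderiv.hasDerivWithinAt).sub_const a))).congr_deriv ?_
  simp only [cutoffSum_inv, Pi.sub_apply, mertensWeight]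
  field_simp
  ring

theorem mertensPotential_le {a y z : ℝ} (hy : 1 < y) (hyz : y ≤ z)
    (ha : ∀ t, y ≤ t → log t + a ≤ rieszMean (fun n ↦ Λ n) t) :
    mertensPotential a y ≤ mertensSum z - log (log z) + (log z)⁻¹ := by
  have hmono : -mertensPotential a z ≤ -mertensPotential a y := by
    refine image_le_of_deriv_right_le_deriv_boundary (B := fun _ ↦ -mertensPotential a y)
      (B' := fun _ ↦ 0) (continuousOn_mertensPotential a hy).neg
      (fun t ht ↦ (hasDerivWithinAt_mertensPotential a (hy.trans_le ht.1)).neg) le_rfl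
      continuousOn_const (fun t _ ↦ hasDerivWithinAt_const ..) (fun t ht ↦ ?_)
      (Set.right_mem_Icc.mpr hyz)
    have : 0 < t := by linarith [ht.1]
    have : 0 < log t := log_pos (hy.trans_le ht.1)
    exact neg_nonpos.mpr (mul_nonneg (by positivity) (by linarith [ha t ht.1]))
  have hz : 0 ≤ mertensWeight z * (rieszMean (fun n ↦ Λ n) z - log z - a) :=
    mul_nonneg (mertensWeight_pos (hy.trans_le hyz)).le (by linarith [ha z hyz])
  unfold mertensPotential at hmono ⊢
  linarith

theorem sum_vonMangoldt_mul (N : ℕ) (h : ℕ → ℝ) :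
    ∑ n ∈ Ioc 0 N, Λ n * h n =
      ∑ p ∈ N.primesLE, ∑ k ∈ Icc 1 (Nat.log p N), log p * h (p ^ k) := by
  have hfilter : ∑ n ∈ Ioc 0 N with IsPrimePow n, Λ n * h n = ∑ n ∈ Ioc 0 N, Λ n * h n :=
    sum_filter_of_ne fun n _ hn ↦
      ArithmeticFunction.vonMangoldt_ne_zero_iff.mp (left_ne_zero_of_mul hn)
  rw [← hfilter, sum_sigma']
  refine (sum_bij (fun (x : (_ : ℕ) × ℕ) _ ↦ x.1 ^ x.2) ?_ ?_ ?_ ?_).symm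
  · rintro ⟨p, k⟩ hx
    simp only [mem_sigma, Nat.mem_primesLE, mem_Icc, mem_filter, mem_Ioc] at hx ⊢
    obtain ⟨⟨hpN, hp⟩, hk, hkN⟩ := hx
    have : 0 < p := hp.pos
    exact ⟨⟨by positivity, Nat.pow_le_of_le_log (by lia) hkN⟩, hp.isPrimePow.pow (by lia)⟩
  · rintro ⟨p, k⟩ hx ⟨q, l⟩ hy heq
    simp only [mem_sigma, Nat.mem_primesLE, mem_Icc] at hx hy heq
    obtain ⟨rfl, rfl⟩ := hx.1.2.pow_inj' hy.1.2 (by lia) (by lia) heq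
    rfl
  · intro n hn
    simp only [mem_filter, mem_Ioc] at hn
    obtain ⟨p, k, hp, hk, rfl⟩ := (isPrimePow_nat_iff n).mp hn.2
    refine ⟨⟨p, k⟩, ?_, rfl⟩
    simp only [mem_sigma, Nat.mem_primesLE, mem_Icc]
    exact ⟨⟨(Nat.le_self_pow hk.ne' p).trans hn.1.2, hp⟩, hk, Nat.le_log_of_pow_le hp.one_lt hn.1.2⟩
  · rintro ⟨p, k⟩ hx
    simp only [mem_sigma, Nat.mem_primesLE, mem_Icc] at hx
    rw [ArithmeticFunction.vonMangoldt_apply_pow (by lia),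
      ArithmeticFunction.vonMangoldt_apply_prime hx.1.2]

theorem sum_Icc_pow_div_eq_sum_range (q : ℝ) (K : ℕ) :
    ∑ k ∈ Icc 1 K, q ^ k / k = ∑ i ∈ range K, q ^ (i + 1) / ((i : ℝ) + 1) := by
  rw [range_eq_Ico, ← Ico_add_one_right_eq_Icc, ← zero_add 1, ← sum_Ico_add']
  push_cast
  rfl

theorem sum_Icc_pow_div_le_neg_log_one_sub {q : ℝ} (hq : 0 ≤ q) (hq1 : q < 1) (K : ℕ) :
    ∑ k ∈ Icc 1 K, q ^ k / k ≤ -log (1 - q) := by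
  rw [sum_Icc_pow_div_eq_sum_range]
  exact sum_le_hasSum (range K) (fun i _ ↦ by positivity)
    (hasSum_pow_div_log_of_abs_lt_one (by rwa [abs_of_nonneg hq]))

theorem tsum_rpow_neg_le {s : ℝ} (hs : 1 < s) : ∑' n : ℕ, (n : ℝ) ^ (-s) ≤ 1 + 1 / (s - 1) := by
  have hsummable : Summable fun n : ℕ ↦ (n : ℝ) ^ (-s) := summable_nat_rpow.mpr (by linarith)
  have hshift : ∑' n : ℕ, (n : ℝ) ^ (-s) = ∑' n : ℕ, 1 / ((n : ℝ) + 1) ^ s := by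
    rw [hsummable.tsum_eq_zero_add, Nat.cast_zero, zero_rpow (by linarith), zero_add]
    refine tsum_congr fun n ↦ ?_
    rw [Nat.cast_add_one, rpow_neg (by positivity), one_div]
  have hterm : 0 ≤ s * ZetaAsymptotics.termTSum s :=
    mul_nonneg (by linarith) (tsum_nonneg fun n ↦ ZetaAsymptotics.term_nonneg _ _)
  linarith [ZetaAsymptotics.zeta_limit_aux1 hs]

theorem prod_primesLE_inv_one_sub_rpow_le {s : ℝ} (hs : 1 < s) (N : ℕ) :
    ∏ p ∈ N.primesLE, (1 - (p : ℝ) ^ (-s))⁻¹ ≤ 1 + 1 / (s - 1) := by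
  let f : ℕ →* ℝ :=
    { toFun n := (n : ℝ) ^ (-s)
      map_one' := by simp
      map_mul' a b := by
        push_cast
        exact mul_rpow (by positivity) (by positivity) }
  have hsum : Summable f := summable_nat_rpow.mpr (by linarith)
  calc ∏ p ∈ N.primesLE, (1 - f p)⁻¹
      = ∑' n : (N + 1).smoothNumbers, f n :=
        EulerProduct.prod_primesBelow_geometric_eq_tsum_smoothNumbers hsum (N + 1)
    _ ≤ ∑' n, f n := hsum.tsum_subtype_le _ _ fun n ↦ rpow_nonneg n.cast_nonneg _
    _ ≤ 1 + 1 / (s - 1) := tsum_rpow_neg_le hs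

theorem prime_rpow_neg_lt_one {p : ℕ} (hp : p.Prime) {s : ℝ} (hs : 0 < s) :
    (p : ℝ) ^ (-s) < 1 :=
  rpow_lt_one_of_one_lt_of_neg (mod_cast hp.one_lt) (by linarith)

theorem sum_vonMangoldt_div_log_mul_rpow_le {δ : ℝ} (hδ : 0 < δ) (N : ℕ) :
    ∑ n ∈ Ioc 0 N, Λ n * (n * log n)⁻¹ * (n : ℝ) ^ (-δ) ≤ log (1 + 1 / δ) := by
  have hq {p : ℕ} (hp : p ∈ N.primesLE) : 0 < 1 - (p : ℝ) ^ (-(1 + δ)) := by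
    linarith [prime_rpow_neg_lt_one (Nat.mem_primesLE.mp hp).2 (by linarith : 0 < 1 + δ)]
  have hterm {p k : ℕ} (hp : p.Prime) (hk : k ≠ 0) :
      log p * (((p ^ k : ℕ) * log (p ^ k : ℕ))⁻¹ * ((p ^ k : ℕ) : ℝ) ^ (-δ)) =
        ((p : ℝ) ^ (-(1 + δ))) ^ k / k := by
    have hp0 : (0 : ℝ) < p := mod_cast hp.pos
    have hlog : log p ≠ 0 := (log_pos (mod_cast hp.one_lt)).ne'
    have hpow : ((p : ℝ) ^ k) ^ (-δ) = (p : ℝ) ^ k * ((p : ℝ) ^ (-(1 + δ))) ^ k := by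
      rw [← rpow_natCast, ← rpow_natCast, ← rpow_mul hp0.le, ← rpow_mul hp0.le, ← rpow_add hp0]
      congr 1
      ring
    push_cast
    rw [hpow, log_pow]
    field_simp
  simp only [mul_assoc]
  calc ∑ n ∈ Ioc 0 N, Λ n * ((n * log n)⁻¹ * (n : ℝ) ^ (-δ))
      = ∑ p ∈ N.primesLE, ∑ k ∈ Icc 1 (Nat.log p N), ((p : ℝ) ^ (-(1 + δ))) ^ k / k := by
        rw [sum_vonMangoldt_mul]
        exact sum_congr rfl fun p hp ↦ sum_congr rfl fun k hk ↦
          hterm (Nat.mem_primesLE.mp hp).2 (by simp only [mem_Icc] at hk; lia)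
    _ ≤ ∑ p ∈ N.primesLE, -log (1 - (p : ℝ) ^ (-(1 + δ))) := sum_le_sum fun p hp ↦
        sum_Icc_pow_div_le_neg_log_one_sub (by positivity) (by linarith [hq hp]) _
    _ = log (∏ p ∈ N.primesLE, (1 - (p : ℝ) ^ (-(1 + δ)))⁻¹) := by
        rw [log_prod fun p hp ↦ inv_ne_zero (hq hp).ne']
        simp only [log_inv]
    _ ≤ log (1 + 1 / δ) := by
        refine log_le_log (prod_pos fun p hp ↦ inv_pos.mpr (hq hp)) ?_
        simpa using prod_primesLE_inv_one_sub_rpow_le (by linarith : 1 < 1 + δ) N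

theorem sum_exp_pow_mul_sub_le {a : ℕ → ℝ} (ha : ∀ n, 0 ≤ a n) {δ : ℝ} (hδ : 0 ≤ δ) (V : ℕ) :
    ∑ m ∈ range V, exp (-δ) ^ (m + 1) *
        (∑ n ∈ Ioc 0 ⌊exp (m + 1 : ℕ)⌋₊, a n - ∑ n ∈ Ioc 0 ⌊exp m⌋₊, a n) ≤
      ∑ n ∈ Ioc 0 ⌊exp V⌋₊, a n * (n : ℝ) ^ (-δ) := by
  induction V with
  | zero => simp [ha 1]
  | succ V ih =>
    have hfloor : ⌊exp V⌋₊ ≤ ⌊exp (V + 1 : ℕ)⌋₊ :=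
      Nat.floor_le_floor (exp_le_exp.mpr (by push_cast; linarith))
    rw [sum_range_succ, ← sum_Ioc_consecutive _ (Nat.zero_le _) hfloor,
      ← sum_Ioc_consecutive _ (Nat.zero_le _) hfloor, add_sub_cancel_left, mul_sum]
    refine add_le_add ih (sum_le_sum fun n hn ↦ ?_)
    simp only [mem_Ioc] at hn
    have hn0 : (0 : ℝ) < n := by exact_mod_cast Nat.zero_lt_of_lt hn.1
    rw [mul_comm]
    refine mul_le_mul_of_nonneg_left ?_ (ha n)
    calc exp (-δ) ^ (V + 1) = exp (V + 1 : ℕ) ^ (-δ) := by rw [← exp_nat_mul, ← exp_mul]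
      _ ≤ (n : ℝ) ^ (-δ) := rpow_le_rpow_of_nonpos hn0
          ((Nat.le_floor_iff (exp_pos _).le).mp hn.2) (by linarith)

theorem sum_range_pow_mul_sub_eq (x : ℝ) (d : ℕ → ℝ) (V : ℕ) :
    ∑ m ∈ range V, x ^ (m + 1) * (d (m + 1) - d m) =
      x ^ V * d V - d 0 + (1 - x) * ∑ m ∈ range V, x ^ m * d m := by
  induction V with
  | zero => simp
  | succ V ih =>
    rw [sum_range_succ, ih, sum_range_succ]
    ring

theorem sub_le_sum_range_pow_mul_sub {e : ℕ → ℝ} (he : e 0 = 0) {x : ℝ} (hx : 0 ≤ x) (hx1 : x ≤ 1)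
    {c : ℝ} {N V : ℕ} (hNV : N ≤ V) (hc : ∀ m, N ≤ m → c ≤ e m) :
    c - (1 - x) * ∑ m ∈ range N, |e m - c| ≤ ∑ m ∈ range V, x ^ (m + 1) * (e (m + 1) - e m) := by
  have hhead : -∑ m ∈ range N, |e m - c| ≤ ∑ m ∈ range N, x ^ m * (e m - c) := by
    rw [← sum_neg_distrib]
    refine sum_le_sum fun m _ ↦ ?_
    rw [neg_le, ← mul_neg]
    exact (mul_le_mul_of_nonneg_left (neg_le_abs _) (by positivity)).trans
      (mul_le_of_le_one_left (abs_nonneg _) (pow_le_one₀ hx hx1))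
  have htail : ∑ m ∈ range N, x ^ m * (e m - c) ≤ ∑ m ∈ range V, x ^ m * (e m - c) :=
    sum_le_sum_of_subset_of_nonneg (range_subset_range.mpr hNV) fun m _ hm ↦
      mul_nonneg (by positivity) (sub_nonneg.mpr (hc m (not_lt.mp (mem_range.not.mp hm))))
  have hparts := sum_range_pow_mul_sub_eq x (fun m ↦ e m - c) V
  simp only [sub_sub_sub_cancel_right, he] at hparts
  have hlast : 0 ≤ x ^ V * (e V - c) := mul_nonneg (by positivity) (sub_nonneg.mpr (hc V hNV))
  have := mul_le_mul_of_nonneg_left (hhead.trans htail) (sub_nonneg.mpr hx1)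
  linarith

/-- Abel's theorem with the harmonic series `∑ x ^ m / m = -log (1 - x)` as reference. -/
theorem nonpos_of_sum_exp_pow_mul_sub_le {b : ℕ → ℝ} (hb0 : b 0 = 0)
    (hb : ∀ δ > 0, ∀ V : ℕ,
      ∑ m ∈ range V, exp (-δ) ^ (m + 1) * (b (m + 1) - b m) ≤ log (1 + 1 / δ))
    {c : ℝ} (hc : ∀ᶠ m : ℕ in atTop, c ≤ b m - harmonic m) : c ≤ 0 := by
  obtain ⟨N, hN⟩ := eventually_atTop.mp hc
  set B := ∑ m ∈ range N, |b m - harmonic m - c|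
  have hbound : ∀ δ > 0, c ≤ δ * (1 + B) := fun δ hδ ↦ by
    set x := exp (-δ)
    have hx0 : 0 < x := exp_pos _
    have hx1 : x < 1 := exp_lt_one_iff.mpr (by linarith)
    have hxδ : 1 - x ≤ δ := by linarith [add_one_le_exp (-δ)]
    have hpartial : ∀ V, N ≤ V →
        ∑ m ∈ range V, x ^ (m + 1) / ((m : ℝ) + 1) ≤ log (1 + 1 / δ) - c + (1 - x) * B := by
      intro V hV
      have hlower := sub_le_sum_range_pow_mul_sub (by simp [hb0]) hx0.le hx1.le hV hN
      have hsplit : ∑ m ∈ range V, x ^ (m + 1) *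
            (b (m + 1) - harmonic (m + 1) - (b m - harmonic m)) =
          ∑ m ∈ range V, x ^ (m + 1) * (b (m + 1) - b m)
            - ∑ m ∈ range V, x ^ (m + 1) / ((m : ℝ) + 1) := by
        rw [← sum_sub_distrib]
        refine sum_congr rfl fun m _ ↦ ?_
        rw [harmonic_succ]
        push_cast
        ring
      linarith [hb δ hδ V]
    have hseries : -log (1 - x) ≤ log (1 + 1 / δ) - c + (1 - x) * B :=
      le_of_tendsto (hasSum_pow_div_log_of_abs_lt_one (by rwa [abs_of_pos hx0])).tendsto_sum_nat
        (eventually_atTop.mpr ⟨N, hpartial⟩)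
    have hlog : log (1 - x) ≤ log δ := log_le_log (by linarith) hxδ
    have hquot : log (1 + 1 / δ) = log (1 + δ) - log δ := by
      rw [← log_div (by positivity) hδ.ne']
      congr 1
      field_simp
      ring
    have hB : (1 - x) * B ≤ δ * B := mul_le_mul_of_nonneg_right hxδ (by positivity)
    linarith [log_le_sub_one_of_pos (by linarith : 0 < 1 + δ)]
  have hlim : Tendsto (fun δ : ℝ ↦ δ * (1 + B)) (𝓝[>] 0) (𝓝 0) := by
    have : Continuous fun δ : ℝ ↦ δ * (1 + B) := by fun_prop
    simpa using this.continuousWithinAt.tendsto (x := 0) (s := Set.Ioi 0)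
  exact ge_of_tendsto hlim (eventually_mem_nhdsWithin.mono hbound)

theorem le_eulerMascheroniConstant_of_le_sum_vonMangoldt {K : ℝ}
    (hK : ∀ᶠ m : ℕ in atTop,
      log m - (m : ℝ)⁻¹ + K ≤ ∑ n ∈ Ioc 0 ⌊exp m⌋₊, Λ n * (n * log n)⁻¹) :
    K ≤ eulerMascheroniConstant := by
  have hnonneg (n : ℕ) : 0 ≤ Λ n * (n * log n)⁻¹ :=
    mul_nonneg ArithmeticFunction.vonMangoldt_nonneg (by positivity)
  have hlim : Tendsto (fun m : ℕ ↦ log m - (m : ℝ)⁻¹ + K - harmonic m) atTop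
      (𝓝 (K - eulerMascheroniConstant)) := by
    rw [← sub_zero (K - _)]
    exact ((tendsto_harmonic_sub_log.const_sub K).sub tendsto_inv_atTop_nhds_zero_nat).congr
      fun m ↦ by ring
  refine le_of_forall_lt_imp_le_of_dense fun c hcK ↦ sub_nonpos.mp ?_
  refine nonpos_of_sum_exp_pow_mul_sub_le
    (b := fun m ↦ ∑ n ∈ Ioc 0 ⌊exp m⌋₊, Λ n * (n * log n)⁻¹) (by simp) (fun δ hδ V ↦
    (sum_exp_pow_mul_sub_le hnonneg hδ.le V).trans (sum_vonMangoldt_div_log_mul_rpow_le hδ _)) ?_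
  filter_upwards [hK, hlim.eventually_const_le (sub_lt_sub_right hcK _)] with m hm hcm
  linarith

theorem mertensSum_le_sum_vonMangoldt {x : ℝ} (hx : 1 ≤ x) :
    mertensSum x ≤ ∑ n ∈ Ioc 0 ⌊x⌋₊, Λ n * (n * log n)⁻¹ := by
  have hcut : 0 ≤ (x * log x)⁻¹ := inv_nonneg.mpr (mul_nonneg (by linarith) (log_nonneg hx))
  simp only [mertensSum, cutoffSum]
  exact sum_le_sum fun n _ ↦ mul_le_mul_of_nonneg_left (sub_le_self _ hcut)
    ArithmeticFunction.vonMangoldt_nonneg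

theorem antitoneOn_log_add_two_div : AntitoneOn (fun t ↦ (log t + 2) / t) (Set.Ici (rexp 1)) := by
  simp only [add_div]
  refine log_div_self_antitoneOn.add fun s hs t _ hst ↦ ?_
  have : 0 < s := (exp_pos 1).trans_le hs
  gcongr

theorem mertensSum_le {y : ℝ} (hy : 24 ≤ y) :
    mertensSum y ≤ log (log y) - (log y)⁻¹ + eulerMascheroniConstant
      + mertensWeight y * (0.0078 + 15.8 * ((log y + 2) / y)) := by
  set r := (log y + 2) / y
  set a := -1.58114 - 7.9 * r with ha
  have hexp : exp 1 ≤ y := by linarith [exp_one_lt_d9]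
  have hlower : ∀ t, y ≤ t → log t + a ≤ rieszMean (fun n ↦ Λ n) t := fun t ht ↦ by
    have := antitoneOn_log_add_two_div hexp (hexp.trans ht) ht
    linarith [le_rieszMean_vonMangoldt (hy.trans ht)]
  have hpotential : mertensPotential a y ≤ eulerMascheroniConstant := by
    refine le_eulerMascheroniConstant_of_le_sum_vonMangoldt ?_
    filter_upwards [tendsto_natCast_atTop_atTop.eventually_ge_atTop (log y)] with m hm
    have hym : y ≤ exp m := (log_le_iff_le_exp (by linarith)).mp hm
    have := mertensPotential_le (by linarith) hym hlower
    rw [log_exp] at this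
    linarith [mertensSum_le_sum_vonMangoldt (one_le_exp (m.cast_nonneg (α := ℝ)))]
  have := mul_le_mul_of_nonneg_left (by linarith [rieszMean_vonMangoldt_le hy] :
    rieszMean (fun n ↦ Λ n) y - log y - a ≤ 0.0078 + 15.8 * r)
    (mertensWeight_pos (by linarith : 1 < y)).le
  unfold mertensPotential at hpotential
  linarith

theorem neg_log_one_sub_sub_sum_le {q : ℝ} (hq : 0 ≤ q) (hq1 : q < 1) (K : ℕ) :
    -log (1 - q) - ∑ k ∈ Icc 1 K, q ^ k / k ≤ q ^ (K + 1) / ((K + 1) * (1 - q)) := by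
  have htail := (hasSum_nat_add_iff' K).mpr
    (hasSum_pow_div_log_of_abs_lt_one (by rwa [abs_of_nonneg hq]))
  have hgeom := (hasSum_geometric_of_lt_one hq hq1).mul_left (q ^ (K + 1) / ((K : ℝ) + 1))
  rw [sum_Icc_pow_div_eq_sum_range, ← div_div, div_eq_mul_inv (_ / _) (1 - q)]
  refine hasSum_le (fun i ↦ ?_) htail hgeom
  calc q ^ (i + K + 1) / (((i + K : ℕ) : ℝ) + 1) ≤ q ^ (i + K + 1) / ((K : ℝ) + 1) := by
        gcongr
        exact Nat.le_add_left K i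
    _ = q ^ (K + 1) / ((K : ℝ) + 1) * q ^ i := by ring

theorem two_mul_card_primesLE_le (n : ℕ) : 2 * #n.primesLE ≤ n + 1 := by
  have hmaps : Set.MapsTo (fun p ↦ (p + 1) / 2) n.primesLE (Icc 1 ((n + 1) / 2)) := fun p hp ↦ by
    have hp' := Nat.mem_primesLE.mp hp
    have := hp'.2.two_le
    simp only [coe_Icc, Set.mem_Icc]
    lia
  have hinj : Set.InjOn (fun p ↦ (p + 1) / 2) (n.primesLE : Set ℕ) := fun p hp q hq hpq ↦ by
    have hp' := (Nat.mem_primesLE.mp hp).2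
    have hq' := (Nat.mem_primesLE.mp hq).2
    have := hp'.two_le
    have := hq'.two_le
    rcases hp'.eq_two_or_odd with h | h <;> rcases hq'.eq_two_or_odd with h' | h' <;> lia
  have hcard := card_le_card_of_injOn _ hmaps hinj
  rw [Nat.card_Icc] at hcard
  lia

theorem sum_Ioc_inv_mul_sub_one_le {s : ℕ} (hs : s ≠ 0) (N : ℕ) :
    ∑ n ∈ Ioc s N, 1 / ((n : ℝ) * (n - 1)) ≤ 1 / s := by
  have hs0 : (0 : ℝ) < s := by positivity
  rcases lt_or_ge N s with h | h
  · rw [Ioc_eq_empty (by lia), sum_empty]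
    positivity
  suffices ∑ n ∈ Ioc s N, 1 / ((n : ℝ) * (n - 1)) = 1 / s - 1 / N by
    rw [this]
    linarith [show (0 : ℝ) ≤ 1 / N by positivity]
  induction N, h using Nat.le_induction with
  | base => simp
  | succ n hn ih =>
    have : (0 : ℝ) < n := hs0.trans_le (mod_cast hn)
    rw [sum_Ioc_succ_top (by lia), ih]
    rw [Nat.cast_succ, add_sub_cancel_right]
    field_simp
    ring

theorem sum_primesLE_gt_inv_mul_sub_one_le {s : ℕ} (hs : s ≠ 0) (N : ℕ) :
    ∑ p ∈ N.primesLE with ¬p ≤ s, 1 / ((p : ℝ) * (p - 1)) ≤ 1 / s := by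
  refine (sum_le_sum_of_subset_of_nonneg (fun p hp ↦ ?_) fun n hn _ ↦ ?_).trans
    (sum_Ioc_inv_mul_sub_one_le hs N)
  · simp only [mem_filter, Nat.mem_primesLE, mem_Ioc] at hp ⊢
    lia
  · have : (1 : ℝ) ≤ n := mod_cast (by have := mem_Ioc.mp hn; lia)
    exact one_div_nonneg.mpr (mul_nonneg (by linarith) (by linarith))

theorem sqrt_sub_one_le_nat_sqrt_floor {y : ℝ} (hy : 0 ≤ y) : √y - 1 ≤ Nat.sqrt ⌊y⌋₊ := by
  have : y < ((Nat.sqrt ⌊y⌋₊ : ℝ) + 1) ^ 2 := by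
    have := (Nat.floor_lt hy).mp (Nat.lt_succ_sqrt' ⌊y⌋₊)
    exact_mod_cast this
  linarith [(sqrt_lt' (by positivity)).mpr this]

/-- The contribution of the powers of the prime `p` to `mertensSum y`. -/
noncomputable def mertensTerm (y : ℝ) (p : ℕ) : ℝ :=
  ∑ k ∈ Icc 1 (Nat.log p ⌊y⌋₊), (p : ℝ)⁻¹ ^ k / k - Nat.log p ⌊y⌋₊ * (log p / (y * log y))

theorem mertensSum_eq_sum_mertensTerm (y : ℝ) :
    mertensSum y = ∑ p ∈ ⌊y⌋₊.primesLE, mertensTerm y p := by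
  unfold mertensSum cutoffSum
  rw [sum_vonMangoldt_mul ⌊y⌋₊ fun n ↦ ((n : ℝ) * log n)⁻¹ - (y * log y)⁻¹]
  refine sum_congr rfl fun p hp ↦ ?_
  have hp1 : (1 : ℝ) < p := mod_cast (Nat.mem_primesLE.mp hp).2.one_lt
  have hlog : 0 < log p := log_pos hp1
  simp only [mul_sub, sum_sub_distrib, sum_const, Nat.card_Icc, add_tsub_cancel_right,
    nsmul_eq_mul, mertensTerm, div_eq_mul_inv (log _)]
  congr 1
  refine sum_congr rfl fun k hk ↦ ?_
  have : (0 : ℝ) < k := mod_cast (mem_Icc.mp hk).1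
  push_cast
  rw [log_pow, inv_pow]
  field_simp

theorem neg_log_one_sub_inv_sub_sum_le {p : ℕ} (hp : p.Prime) (K : ℕ) :
    -log (1 - (p : ℝ)⁻¹) - ∑ k ∈ Icc 1 K, (p : ℝ)⁻¹ ^ k / k ≤
      1 / ((K + 1) * (p ^ K * (p - 1))) := by
  have hp1 : (1 : ℝ) < p := mod_cast hp.one_lt
  have : (p : ℝ) - 1 ≠ 0 := by linarith
  refine (neg_log_one_sub_sub_sum_le (by positivity) (inv_lt_one_of_one_lt₀ hp1) K).trans_eq ?_
  rw [inv_pow, pow_succ]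
  field_simp

theorem two_div_add_sub_one_div_le {J : ℕ} (hJ : 2 ≤ J) :
    2 / ((J : ℝ) + 1) + (J - 1) / J ≤ 7 / 6 := by
  have hJ0 : (0 : ℝ) < J := by positivity
  have hprod : (0 : ℝ) ≤ (J - 2) * (J - 3) := by
    rcases hJ.eq_or_lt with rfl | h
    · norm_num
    · have : (3 : ℝ) ≤ J := mod_cast h
      exact mul_nonneg (by linarith) (by linarith)
  rw [div_add_div _ _ (by positivity) hJ0.ne', div_le_div_iff₀ (by positivity) (by norm_num)]
  linarith

theorem neg_log_one_sub_inv_sub_le_of_le_sqrt {y : ℝ} (hy : 1 < y) {p : ℕ} (hp : p.Prime)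
    (hpy : p ≤ Nat.sqrt ⌊y⌋₊) :
    -log (1 - (p : ℝ)⁻¹) - log p / (y * log y) ≤ mertensTerm y p + 7 / 6 / y := by
  set J := Nat.log p ⌊y⌋₊ with hJ
  have hy0 : 0 < y := by linarith
  have hlog : 0 < log y := log_pos hy
  have hp2 : (2 : ℝ) ≤ p := mod_cast hp.two_le
  have hJ2 : 2 ≤ J := Nat.le_log_of_pow_le hp.one_lt (by rw [sq]; exact Nat.le_sqrt.mp hpy)
  have hJ2' : (2 : ℝ) ≤ J := mod_cast hJ2
  have hlt_pow : y < (p : ℝ) ^ (J + 1) :=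
    mod_cast (Nat.floor_lt hy0.le).mp (Nat.lt_pow_succ_log_self hp.one_lt ⌊y⌋₊)
  have hpow_le : (p : ℝ) ^ J ≤ y := by
    have := (Nat.le_floor_iff hy0.le).mp (Nat.pow_log_le_self p (Nat.floor_pos.mpr hy.le).ne')
    exact_mod_cast this
  have htail : -log (1 - (p : ℝ)⁻¹) - ∑ k ∈ Icc 1 J, (p : ℝ)⁻¹ ^ k / k ≤
      2 / ((J : ℝ) + 1) / y := by
    have hden : y ≤ 2 * ((p : ℝ) ^ J * (p - 1)) := by
      have : (p : ℝ) ^ J * p ≤ p ^ J * (2 * (p - 1)) := by gcongr; linarith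
      rw [pow_succ] at hlt_pow
      linarith
    refine (neg_log_one_sub_inv_sub_sum_le hp J).trans ?_
    rw [div_div, div_le_div_iff₀ (by nlinarith) (by positivity)]
    nlinarith
  have hcut : (J - 1) * (log p / (y * log y)) ≤ (J - 1) / J / y := by
    have hlog_le : J * log p ≤ log y := by
      rw [← log_pow]
      exact log_le_log (by positivity) hpow_le
    rw [div_div, ← mul_div_assoc, div_le_div_iff₀ (by positivity) (by positivity)]
    have := mul_le_mul_of_nonneg_left hlog_le (mul_nonneg (by linarith : (0 : ℝ) ≤ J - 1) hy0.le)
    linarith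
  have hsum := div_le_div_of_nonneg_right (two_div_add_sub_one_div_le hJ2) hy0.le
  rw [add_div] at hsum
  simp only [mertensTerm, ← hJ]
  linarith

theorem neg_log_one_sub_inv_sub_le_of_sqrt_lt {y : ℝ} {p : ℕ} (hp : p.Prime)
    (hpy : p ≤ ⌊y⌋₊) (hlt : Nat.sqrt ⌊y⌋₊ < p) :
    -log (1 - (p : ℝ)⁻¹) - log p / (y * log y) ≤
      mertensTerm y p + 1 / 2 * (1 / ((p : ℝ) * (p - 1))) := by
  have hlog : Nat.log p ⌊y⌋₊ = 1 :=
    Nat.log_eq_one_iff'.mpr ⟨hpy, Nat.sqrt_lt.mp hlt⟩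
  have htail := neg_log_one_sub_inv_sub_sum_le hp 1
  have heq : 1 / (((1 : ℕ) + 1 : ℝ) * ((p : ℝ) ^ 1 * (p - 1))) =
      1 / 2 * (1 / ((p : ℝ) * (p - 1))) := by
    rw [Nat.cast_one, pow_one, one_div_mul_one_div, one_add_one_eq_two]
  rw [heq] at htail
  simp only [mertensTerm, hlog, Nat.cast_one, one_mul]
  linarith

theorem sum_primesLE_neg_log_one_sub_inv_sub_le {y : ℝ} (hy : 1 < y) :
    ∑ p ∈ ⌊y⌋₊.primesLE, (-log (1 - (p : ℝ)⁻¹) - log p / (y * log y)) ≤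
      mertensSum y + 1 / (2 * (√y - 1)) + 7 / 12 * (√y + 1) / y := by
  set N := ⌊y⌋₊
  set s := Nat.sqrt N
  have hy0 : 0 < y := by linarith
  have hs0 : s ≠ 0 := (Nat.sqrt_pos.mpr (Nat.floor_pos.mpr hy.le)).ne'
  have hs_le : (s : ℝ) ≤ √y :=
    nat_sqrt_le_real_sqrt.trans (sqrt_le_sqrt (Nat.floor_le hy0.le))
  have hs_ge : √y - 1 ≤ s := sqrt_sub_one_le_nat_sqrt_floor hy0.le
  have hsqrt : 1 < √y := by rwa [lt_sqrt zero_le_one, one_pow]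
  have hterm : ∀ p ∈ N.primesLE, -log (1 - (p : ℝ)⁻¹) - log p / (y * log y) ≤
      mertensTerm y p + if p ≤ s then 7 / 6 / y else 1 / 2 * (1 / ((p : ℝ) * (p - 1))) :=
    fun p hp ↦ by
      obtain ⟨hpN, hp⟩ := Nat.mem_primesLE.mp hp
      split_ifs with hc
      · exact neg_log_one_sub_inv_sub_le_of_le_sqrt hy hp hc
      · exact neg_log_one_sub_inv_sub_le_of_sqrt_lt hp hpN (not_le.mp hc)
  have hsmall : ∑ p ∈ N.primesLE with p ≤ s, 7 / 6 / y ≤ 7 / 12 * (√y + 1) / y := by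
    have hcard : #{p ∈ N.primesLE | p ≤ s} ≤ #s.primesLE := card_le_card fun p hp ↦ by
      simp only [mem_filter, Nat.mem_primesLE] at hp ⊢
      exact ⟨hp.2, hp.1.2⟩
    have hcard' : (2 : ℝ) * #{p ∈ N.primesLE | p ≤ s} ≤ s + 1 :=
      mod_cast (Nat.mul_le_mul_left 2 hcard).trans (two_mul_card_primesLE_le s)
    rw [sum_const, nsmul_eq_mul, ← mul_div_assoc]
    exact div_le_div_of_nonneg_right (by linarith) hy0.le
  have hlarge : ∑ p ∈ N.primesLE with ¬p ≤ s, 1 / 2 * (1 / ((p : ℝ) * (p - 1))) ≤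
      1 / (2 * (√y - 1)) := by
    rw [← mul_sum, ← one_div_mul_one_div]
    gcongr
    exact (sum_primesLE_gt_inv_mul_sub_one_le hs0 N).trans
      (one_div_le_one_div_of_le (by linarith) hs_ge)
  have htotal := sum_le_sum hterm
  rw [sum_add_distrib, ← mertensSum_eq_sum_mertensTerm, sum_ite] at htotal
  linarith

theorem log_div_totient {k : ℕ} (hk : k ≠ 0) :
    log (k / k.totient) = ∑ p ∈ k.primeFactors, -log (1 - (p : ℝ)⁻¹) := by
  have htot : (k.totient : ℝ) = k * ∏ p ∈ k.primeFactors, (1 - (p : ℝ)⁻¹) := by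
    have := congrArg (Rat.cast (K := ℝ)) (Nat.totient_eq_mul_prod_factors k)
    push_cast at this
    exact this
  rw [htot, div_mul_cancel_left₀ (Nat.cast_ne_zero.mpr hk), log_inv, log_prod, sum_neg_distrib]
  intro p hp
  have := inv_lt_one_of_one_lt₀ (a := (p : ℝ)) (mod_cast (Nat.prime_of_mem_primeFactors hp).one_lt)
  linarith

theorem sum_primeFactors_log_le {k : ℕ} (hk : k ≠ 0) : ∑ p ∈ k.primeFactors, log p ≤ log k := by
  have hpos : ∀ p ∈ k.primeFactors, (0 : ℝ) < p := fun p hp ↦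
    mod_cast (Nat.prime_of_mem_primeFactors hp).pos
  rw [← log_prod fun p hp ↦ (hpos p hp).ne']
  refine log_le_log (prod_pos hpos) ?_
  rw [← Nat.cast_prod]
  exact Nat.cast_le.mpr (Nat.le_of_dvd (Nat.pos_of_ne_zero hk) (Nat.prod_primeFactors_dvd k))

theorem neg_log_one_sub_inv_le_of_lt {y p : ℝ} (hy : 1 < y) (hyp : y < p) :
    -log (1 - p⁻¹) ≤ log p * (1 / ((y - 1) * log y)) := by
  have : 0 < y - 1 := by linarith
  have : 0 < p - 1 := by linarith
  have hlogy : 0 < log y := log_pos hy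
  have hlog : log y ≤ log p := log_le_log (by linarith) hyp.le
  have hinv : 0 < 1 - p⁻¹ := sub_pos.mpr (inv_lt_one_of_one_lt₀ (hy.trans hyp))
  calc -log (1 - p⁻¹) ≤ (1 - p⁻¹)⁻¹ - 1 := by
        rw [← log_inv]
        exact log_le_sub_one_of_pos (inv_pos.mpr hinv)
    _ = 1 / (p - 1) := by
        have : p ≠ 0 := by linarith
        field_simp
        ring
    _ ≤ log p / ((y - 1) * log y) := by
        rw [div_le_div_iff₀ (by positivity) (by positivity)]
        nlinarith
    _ = log p * (1 / ((y - 1) * log y)) := (mul_one_div _ _).symm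

theorem div_mul_log_le_neg_log_one_sub_inv {y p : ℝ} (hp : 1 < p) (hpy : p ≤ y) :
    log p / (y * log y) ≤ -log (1 - p⁻¹) := by
  have hlog : log p ≤ log y := log_le_log (by linarith) hpy
  have hlogp : 0 < log p := log_pos hp
  have hy0 : 0 < y := by linarith
  calc log p / (y * log y) ≤ log p / (p * log p) := by gcongr
    _ = p⁻¹ := by field_simp
    _ ≤ -log (1 - p⁻¹) := by
        linarith [log_le_sub_one_of_pos (sub_pos.mpr (inv_lt_one_of_one_lt₀ hp))]

theorem log_div_totient_le_sum_primesLE {k : ℕ} (hk : k ≠ 0) (hy : 1 < log k) :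
    log (k / k.totient) ≤
      ∑ p ∈ ⌊log k⌋₊.primesLE, (-log (1 - (p : ℝ)⁻¹) - log p / (log k * log (log k))) +
        log k / ((log k - 1) * log (log k)) := by
  set y := log k
  have hlogy : 0 < log y := log_pos hy
  have : 0 < y - 1 := by linarith
  have hterm : ∀ p ∈ k.primeFactors, -log (1 - (p : ℝ)⁻¹) ≤
      (if p ≤ ⌊y⌋₊ then -log (1 - (p : ℝ)⁻¹) - log p / (y * log y) else 0) +
        log p * (1 / ((y - 1) * log y)) := fun p _ ↦ by
    split_ifs with hc
    · have : log p / (y * log y) ≤ log p * (1 / ((y - 1) * log y)) := by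
        rw [mul_one_div]
        have := log_natCast_nonneg p
        gcongr
        linarith
      linarith
    · rw [zero_add]
      exact neg_log_one_sub_inv_le_of_lt hy ((Nat.floor_lt (by linarith)).mp (not_le.mp hc))
  rw [log_div_totient hk]
  refine (sum_le_sum hterm).trans ?_
  rw [sum_add_distrib, ← sum_mul, ← sum_filter]
  refine add_le_add (sum_le_sum_of_subset_of_nonneg (fun p hp ↦ ?_) fun p hp _ ↦ ?_) ?_
  · obtain ⟨hpk, hpy⟩ := mem_filter.mp hp
    exact Nat.mem_primesLE.mpr ⟨hpy, Nat.prime_of_mem_primeFactors hpk⟩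
  · obtain ⟨hpy, hp⟩ := Nat.mem_primesLE.mp hp
    exact sub_nonneg.mpr (div_mul_log_le_neg_log_one_sub_inv (mod_cast hp.one_lt)
      ((Nat.le_floor_iff (by linarith)).mp hpy))
  · rw [div_eq_mul_one_div y]
    gcongr
    exact sum_primeFactors_log_le hk

theorem log_le_sub_inv_div_two {x : ℝ} (hx : 1 ≤ x) : log x ≤ (x - x⁻¹) / 2 := by
  rw [← sinh_log (by linarith)]
  exact self_le_sinh_iff.mpr (log_nonneg hx)

theorem harmonic_181_le : (harmonic 181 : ℝ) ≤ 5.7784726 := by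
  have h : harmonic 181 ≤ 57784726 / 10000000 := by decide +kernel
  have h' : (harmonic 181 : ℝ) ≤ ((57784726 / 10000000 : ℚ) : ℝ) := Rat.cast_le.mpr h
  generalize harmonic 181 = H at h' ⊢
  norm_num at h' ⊢
  exact h'

theorem eulerMascheroniConstant_add_le_log :
    eulerMascheroniConstant + 0.000014 ≤ log 1.7811 := by
  have hγ := eulerMascheroniConstant_add_log_le_harmonic 181
  have hH := harmonic_181_le
  have h324 : log 324 = 2 * log 2 + 4 * log 3 := by
    rw [show (324 : ℝ) = 2 ^ 2 * 3 ^ 4 by norm_num, log_mul (by norm_num) (by norm_num), log_pow,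
      log_pow]
    norm_num
  -- `e ^ H₁₈₁ ≈ 323.27`, and `324 = 2² * 3⁴` is the nearest number whose logarithm is at hand.
  have hratio := log_le_sub_inv_div_two (x := 324 / (1.7811 * 181.5)) (by norm_num)
  rw [log_div (by norm_num) (by norm_num), log_mul (by norm_num) (by norm_num), h324] at hratio
  have h181 : ((181 : ℕ) : ℝ) + 1 / 2 = 181.5 := by norm_num
  rw [h181] at hγ
  generalize harmonic 181 = H at hγ hH
  norm_num at hγ hratio ⊢
  linarith [log_two_gt_d9, log_three_gt_d9]

theorem exp_nine_gt : (8103 : ℝ) < exp 9 := by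
  have h : exp 9 = exp 1 ^ 9 := by rw [← exp_nat_mul]; norm_num
  rw [h]
  calc (8103 : ℝ) < 2.7182818283 ^ 9 := by norm_num
    _ ≤ exp 1 ^ 9 := by gcongr; exact exp_one_gt_d9.le

theorem sqrt_exp_bounds {L : ℝ} (hL : 9 ≤ L) : 90.01 ≤ √(exp L) ∧ L ^ 3 ≤ 8.1 * √(exp L) := by
  have hroot : 90.01 ≤ √(exp 9) := le_sqrt_of_sq_le (by norm_num; linarith [exp_nine_gt])
  have hfactor : √(exp L) = √(exp 9) * exp ((L - 9) / 2) := by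
    rw [← exp_half, ← exp_half, ← exp_add]
    congr 1
    ring
  have hone : 1 ≤ exp ((L - 9) / 2) := one_le_exp (by linarith)
  have hcube : L ^ 3 ≤ 729 * exp ((L - 9) / 2) := by
    calc L ^ 3 = 729 * ((L - 9) / 9 + 1) ^ 3 := by ring
      _ ≤ 729 * exp ((L - 9) / 9) ^ 3 := by
        have : 0 ≤ (L - 9) / 9 + 1 := by linarith
        gcongr
        exact add_one_le_exp _
      _ ≤ 729 * exp ((L - 9) / 2) := by
        rw [← exp_nat_mul]
        gcongr
        push_cast
        linarith
  rw [hfactor]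
  exact ⟨by nlinarith, by nlinarith⟩

theorem cubic_error_le {L : ℝ} (hL : 9 ≤ L) :
    0.0078 * L ^ 2 + 0.0078 * L + 10.92 ≤ 0.000014 * L ^ 3 + 1.385 * L := by
  rcases le_total L 30 with h | h
  · nlinarith [mul_nonneg (sub_nonneg.mpr hL) (sub_nonneg.mpr h), pow_pos (by linarith : 0 < L) 3]
  · nlinarith [mul_nonneg (by linarith : 0 ≤ L) (sq_nonneg (L - 278.6))]

theorem mertensWeight_mul_le {L : ℝ} (hL : 9 ≤ L) {r : ℝ} (hr : 90 ≤ r) :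
    (L⁻¹ + (L ^ 2)⁻¹) * (15.8 * ((L + 2) / r ^ 2)) ≤ 0.2506 / r := by
  have : 0 < r := by linarith
  have : 0 < L := by linarith
  have hweight : L⁻¹ + (L ^ 2)⁻¹ ≤ 10 / 9 / L := by
    rw [inv_eq_one_div, inv_eq_one_div, div_add_div _ _ (by positivity) (by positivity),
      div_le_div_iff₀ (by positivity) (by positivity)]
    nlinarith [pow_pos ‹0 < L› 3]
  have hquot : (L + 2) / r ^ 2 ≤ 11 / 9 * L / (90 * r) :=
    div_le_div₀ (by positivity) (by linarith) (by positivity) (by nlinarith)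
  calc (L⁻¹ + (L ^ 2)⁻¹) * (15.8 * ((L + 2) / r ^ 2))
      ≤ 10 / 9 / L * (15.8 * (11 / 9 * L / (90 * r))) := by gcongr
    _ = 15.8 * (10 / 9) * (11 / 9) / 90 / r := by field_simp
    _ ≤ 0.2506 / r := by gcongr; norm_num

/-- With `L = log log k` and `r = √(log k)`, the left-hand side collects the lower-order terms of
the bound for `log (k / φ k)`. -/
theorem sum_error_terms_le {L r : ℝ} (hL : 9 ≤ L) (hr : 90.01 ≤ r) (hLr : L ^ 3 ≤ 8.1 * r) :
    1 / (2 * (r - 1)) + 7 / 12 * (r + 1) / r ^ 2 + r ^ 2 / ((r ^ 2 - 1) * L) +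
      (L⁻¹ + (L ^ 2)⁻¹) * (15.8 * ((L + 2) / r ^ 2)) ≤ L⁻¹ + 10.92 / L ^ 3 := by
  have hr0 : 0 < r := by linarith
  have : 0 < L := by linarith
  have hsq : 89 * r ≤ r ^ 2 - 1 := by nlinarith
  have htail : 1 / (2 * (r - 1)) ≤ 0.5057 / r := by
    rw [div_le_div_iff₀ (by linarith) hr0]
    linarith
  have hsmall : 7 / 12 * (r + 1) / r ^ 2 ≤ 0.5899 / r := by
    rw [div_le_div_iff₀ (by positivity) hr0]
    nlinarith
  have hdivisors : r ^ 2 / ((r ^ 2 - 1) * L) ≤ L⁻¹ + 0.00126 / r := by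
    have hpos : 0 < r ^ 2 - 1 := by linarith
    have hsplit : r ^ 2 / ((r ^ 2 - 1) * L) = L⁻¹ + 1 / ((r ^ 2 - 1) * L) := by
      field_simp
      ring
    have hprod : 89 * r * 9 ≤ (r ^ 2 - 1) * L := mul_le_mul hsq hL (by norm_num) hpos.le
    rw [hsplit, add_le_add_iff_left, div_le_div_iff₀ (by positivity) hr0]
    linarith
  have hmertens := mertensWeight_mul_le hL (by linarith : 90 ≤ r)
  have htotal : 0.5057 / r + 0.5899 / r + 0.00126 / r + 0.2506 / r ≤ 10.92 / L ^ 3 := by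
    rw [← add_div, ← add_div, ← add_div, div_le_div_iff₀ hr0 (by positivity)]
    linarith
  linarith

theorem le_log_one_add_div_sq {L : ℝ} (hL : 9 ≤ L) :
    1.385 / L ^ 2 ≤ log (1 + 2.51 / (1.7811 * L ^ 2)) := by
  have : 0 < L := by linarith
  refine le_trans ?_ (one_sub_inv_le_log_of_pos (by positivity))
  have heq : 1 - (1 + 2.51 / (1.7811 * L ^ 2))⁻¹ = 2.51 / (1.7811 * L ^ 2 + 2.51) := by
    field_simp
    ring
  rw [heq, div_le_div_iff₀ (by positivity) (by positivity)]
  nlinarith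

theorem mertens_main_terms_le_log {L : ℝ} (hL : 9 ≤ L) :
    log L + eulerMascheroniConstant + (L⁻¹ + (L ^ 2)⁻¹) * 0.0078 + 10.92 / L ^ 3 ≤
      log (1.7811 * L + 2.51 / L) := by
  have hL0 : 0 < L := by linarith
  have hfactor : 1.7811 * L + 2.51 / L = 1.7811 * L * (1 + 2.51 / (1.7811 * L ^ 2)) := by
    field_simp
  have hcubic : (L⁻¹ + (L ^ 2)⁻¹) * 0.0078 + 10.92 / L ^ 3 ≤ 0.000014 + 1.385 / L ^ 2 := by
    have heq : 0.000014 + 1.385 / L ^ 2 - ((L⁻¹ + (L ^ 2)⁻¹) * 0.0078 + 10.92 / L ^ 3) =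
        (0.000014 * L ^ 3 + 1.385 * L - (0.0078 * L ^ 2 + 0.0078 * L + 10.92)) / L ^ 3 := by
      field_simp
    have := div_nonneg (sub_nonneg.mpr (cubic_error_le hL)) (by positivity : 0 ≤ L ^ 3)
    linarith
  rw [hfactor, log_mul (by positivity) (by positivity), log_mul (by norm_num) hL0.ne']
  linarith [le_log_one_add_div_sq hL, eulerMascheroniConstant_add_le_log]

theorem div_totient_le_of_nine_le_log_log {k : ℕ} (hk : k ≠ 0) (hL : 9 ≤ log (log k)) :
    k / k.totient ≤ 1.7811 * log (log k) + 2.51 / log (log k) := by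
  set L := log (log k) with hL_def
  have hy0 : 0 < log k := (log_natCast_nonneg k).lt_of_ne fun h ↦ by
    rw [hL_def, ← h, log_zero] at hL
    linarith
  have hexp : log k = exp L := (exp_log hy0).symm
  obtain ⟨hr, hLr⟩ := sqrt_exp_bounds hL
  rw [← hexp] at hr hLr
  have hsq : √(log k) ^ 2 = log k := sq_sqrt hy0.le
  have hy : 24 ≤ log k := by nlinarith
  have hprimes := sum_primesLE_neg_log_one_sub_inv_sub_le (by linarith : 1 < log k)
  have hmertens := mertensSum_le hy
  have herror := sum_error_terms_le hL hr hLr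
  rw [hsq] at herror
  rw [mertensWeight, ← hL_def, mul_add] at hmertens
  have : 0 < (k.totient : ℝ) := mod_cast Nat.totient_pos.mpr (Nat.pos_of_ne_zero hk)
  have : (0 : ℝ) < k := mod_cast Nat.pos_of_ne_zero hk
  refine (log_le_log_iff (by positivity) (by positivity)).mp ?_
  linarith [log_div_totient_le_sum_primesLE hk (by linarith : 1 < log k),
    mertens_main_terms_le_log hL]

theorem prime_iff_coprime_primorial {R n : ℕ} (hRn : R < n) (hn : n < (R + 1) ^ 2) :
    n.Prime ↔ n.Coprime (primorial R) := by
  refine ⟨fun hp ↦ hp.coprime_iff_not_dvd.mpr fun h ↦ ?_, fun hcop ↦ ?_⟩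
  · exact absurd (hp.dvd_primorial_iff.mp h) (by omega)
  · have hn1 : n ≠ 1 := by rintro rfl; simp_all
    by_contra hcomp
    have hsq := Nat.minFac_sq_le_self (by omega) hcomp
    have hmin : n.minFac ≤ R := by
      by_contra! h
      nlinarith
    exact (Nat.minFac_prime hn1).not_dvd_one <|
      hcop ▸ Nat.dvd_gcd n.minFac_dvd ((Nat.minFac_prime hn1).dvd_primorial_iff.mpr hmin)

theorem prod_primesLE_add {M : Type*} [CommMonoid M] (f : ℕ → M) {R m : ℕ}
    (hm : R + m < (R + 1) ^ 2) :
    ∏ p ∈ (R + m).primesLE, f p =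
      (∏ p ∈ R.primesLE, f p) * ∏ p ∈ Ioc R (R + m) with p.Coprime (primorial R), f p := by
  rw [← prod_union]
  · congr 1
    ext p
    simp only [Nat.mem_primesLE, mem_union, mem_filter, mem_Ioc]
    constructor
    · rintro ⟨hpm, hp⟩
      rcases le_or_gt p R with h | h
      · exact .inl ⟨h, hp⟩
      · exact .inr ⟨⟨h, hpm⟩, (prime_iff_coprime_primorial h (by omega)).mp hp⟩
    · rintro (⟨h, hp⟩ | ⟨⟨h, hpm⟩, hcop⟩)
      · exact ⟨by omega, hp⟩
      · exact ⟨hpm, (prime_iff_coprime_primorial h (by omega)).mpr hcop⟩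
  · refine disjoint_left.mpr fun p hp hp' ↦ ?_
    simp only [Nat.mem_primesLE, mem_filter, mem_Ioc] at hp hp'
    omega

theorem totient_primorial (R : ℕ) : (primorial R).totient = ∏ p ∈ R.primesLE, (p - 1) := by
  have h := Nat.totient_mul_prod_primeFactors (primorial R)
  rw [primeFactors_primorial, ← primorial_eq_prod_primesLE, mul_comm] at h
  exact Nat.eq_of_mul_eq_mul_left (primorial_pos R) h

theorem prod_mul_pow_card_sub_le_prod {ι A : Type*} [DecidableEq ι] [CommSemiring A]
    [PartialOrder A] [IsOrderedRing A] {S T : Finset ι} {g : ι → A} {B : A} (hcard : #S ≤ #T)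
    (hg : ∀ i ∈ S, 0 ≤ g i) (hB : 0 ≤ B) (hS : ∀ i ∈ S \ T, g i ≤ B)
    (hT : ∀ i ∈ T \ S, B ≤ g i) : (∏ i ∈ S, g i) * B ^ (#T - #S) ≤ ∏ i ∈ T, g i := by
  have hpow : B ^ #(S \ T) * B ^ (#T - #S) = B ^ #(T \ S) := by
    rw [← pow_add]
    congr 1
    have := card_sdiff_add_card_inter S T
    have := card_sdiff_add_card_inter T S
    rw [inter_comm] at this
    omega
  rw [← prod_inter_mul_prod_sdiff S T, ← prod_inter_mul_prod_sdiff T S, inter_comm T S, mul_assoc]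
  refine mul_le_mul_of_nonneg_left ?_ (prod_nonneg fun i hi ↦ hg i (mem_of_mem_inter_left hi))
  calc (∏ i ∈ S \ T, g i) * B ^ (#T - #S) ≤ B ^ #(S \ T) * B ^ (#T - #S) := by
        refine mul_le_mul_of_nonneg_right ?_ (pow_nonneg hB _)
        rw [← prod_const]
        exact prod_le_prod (fun _ hi ↦ hg _ (mem_sdiff.mp hi).1) hS
    _ = ∏ _ ∈ T \ S, B := by rw [hpow, prod_const]
    _ ≤ ∏ i ∈ T \ S, g i := prod_le_prod (fun _ _ ↦ hB) hT

theorem primorial_mul_succ_le {k R : ℕ} (hk : k ≠ 0) (hcard : #R.primesLE < #k.primeFactors) :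
    primorial R * (R + 1) ≤ k := by
  have hexchange := prod_mul_pow_card_sub_le_prod (g := fun p : ℕ ↦ p) (B := R + 1) hcard.le
    (fun _ _ ↦ Nat.zero_le _) (Nat.zero_le _)
    (fun p hp ↦ (Nat.le_of_mem_primesLE (mem_sdiff.mp hp).1).trans R.le_succ)
    (fun p hp ↦ by
      by_contra! hpR
      obtain ⟨hpk, hp'⟩ := mem_sdiff.mp hp
      exact hp' (Nat.mem_primesLE.mpr ⟨Nat.le_of_lt_succ hpR, Nat.prime_of_mem_primeFactors hpk⟩))
  calc primorial R * (R + 1) ≤ primorial R * (R + 1) ^ (#k.primeFactors - #R.primesLE) := by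
        gcongr
        exact Nat.le_self_pow (by omega) _
    _ ≤ ∏ p ∈ k.primeFactors, p := hexchange
    _ ≤ k := Nat.le_of_dvd (Nat.pos_of_ne_zero hk) (Nat.prod_primeFactors_dvd k)

theorem div_totient_eq_prod_primeFactors {k : ℕ} (hk : k ≠ 0) :
    (k / k.totient : ℝ) = ∏ p ∈ k.primeFactors, (1 + ((p : ℝ) - 1)⁻¹) := by
  have hφ : (k.totient : ℝ) ≠ 0 := mod_cast (Nat.totient_pos.mpr (Nat.pos_of_ne_zero hk)).ne'
  have hone : ∀ p ∈ k.primeFactors, ((p : ℝ) - 1) ≠ 0 := fun p hp ↦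
    sub_ne_zero.mpr (mod_cast (Nat.prime_of_mem_primeFactors hp).ne_one)
  have hfactor : ∀ p ∈ k.primeFactors, 1 + ((p : ℝ) - 1)⁻¹ = p / (p - 1) := fun p hp ↦ by
    have := hone p hp
    field_simp
    ring
  rw [prod_congr rfl hfactor, prod_div_distrib, div_eq_div_iff hφ (prod_ne_zero_iff.mpr hone)]
  have h := congrArg (Nat.cast (R := ℝ)) (Nat.totient_mul_prod_primeFactors k)
  push_cast at h
  rw [mul_comm (∏ p ∈ k.primeFactors, (p : ℝ)), h]
  congr 1
  exact prod_congr rfl fun p hp ↦ by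
    rw [Nat.cast_sub (Nat.prime_of_mem_primeFactors hp).one_le, Nat.cast_one]

theorem div_totient_le_primorial_div_totient {k R : ℕ} (hk : k ≠ 0) (hR : R ≠ 0)
    (hcard : #k.primeFactors ≤ #R.primesLE) :
    (k / k.totient : ℝ) ≤ primorial R / (primorial R).totient := by
  have : (0 : ℝ) < R := mod_cast Nat.pos_of_ne_zero hR
  have hone : ∀ p : ℕ, p.Prime → (0 : ℝ) < p - 1 := fun p hp ↦
    sub_pos.mpr (mod_cast hp.one_lt)
  rw [div_totient_eq_prod_primeFactors hk, div_totient_eq_prod_primeFactors (primorial_ne_zero R),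
    primeFactors_primorial]
  refine (le_mul_of_one_le_right (prod_nonneg ?_) (one_le_pow₀ ?_)).trans
    (prod_mul_pow_card_sub_le_prod (B := 1 + (R : ℝ)⁻¹) hcard ?_ (by positivity) ?_ ?_)
  · exact fun p hp ↦ (add_pos one_pos (inv_pos.mpr (hone p (Nat.prime_of_mem_primeFactors hp)))).le
  · exact le_add_of_nonneg_right (by positivity)
  · exact fun p hp ↦ (add_pos one_pos (inv_pos.mpr (hone p (Nat.prime_of_mem_primeFactors hp)))).le
  · intro p hp
    obtain ⟨hpk, hpR⟩ := mem_sdiff.mp hp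
    have hprime := Nat.prime_of_mem_primeFactors hpk
    have hlt : R + 1 ≤ p := by
      by_contra! h
      exact hpR (Nat.mem_primesLE.mpr ⟨Nat.le_of_lt_succ h, hprime⟩)
    have : (R : ℝ) + 1 ≤ p := mod_cast hlt
    gcongr
    linarith
  · intro p hp
    obtain ⟨hpR, hprime⟩ := Nat.mem_primesLE.mp (mem_sdiff.mp hp).1
    have : (p : ℝ) ≤ R := mod_cast hpR
    have := hone p hprime
    gcongr
    linarith

theorem exp_two_mul_div_le {n : ℕ} (hn : n ≠ 0) (j : ℕ) :
    exp (2 * j / (2 * n + 1)) ≤ ((n + 1) / n) ^ j := by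
  have : (0 : ℝ) < n := mod_cast Nat.pos_of_ne_zero hn
  have hlog : 2 / (2 * n + 1) ≤ log ((n + 1) / n) := by
    calc (2 / (2 * n + 1) : ℝ) = 2 * (1 / n) / (1 / n + 2) := by field_simp; ring
      _ ≤ log (1 + 1 / n) := le_log_one_add_of_nonneg (by positivity)
      _ = log ((n + 1) / n) := by congr 1; field_simp
  calc exp (2 * j / (2 * n + 1)) = exp (2 / (2 * n + 1)) ^ j := by
        rw [← exp_nat_mul]
        congr 1
        ring
    _ ≤ ((n + 1) / n) ^ j := by
        gcongr
        exact (le_log_iff_exp_le (by positivity)).mp hlog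

/-- An integer test implying `2 * j / 2001 ≤ log (log n)`. The exponent of `2` is a number `a` with
`(1001 / 1000) ^ j < a * 0.693147 / 100`, so that `2 ^ a ≤ n ^ 100` makes `log n` larger than
`(1001 / 1000) ^ j`, which is at least `exp (2 * j / 2001)`. -/
def logLogTest (j n : ℕ) : Bool :=
  2 ^ (1001 ^ j * 10 ^ 8 / (1000 ^ j * 693147) + 1) ≤ n ^ 100

theorem le_log_log_of_logLogTest {j n k : ℕ} (h : logLogTest j n) (hnk : n ≤ k) :
    2 * j / 2001 ≤ log (log k) := by
  obtain ⟨a, ha, htest⟩ : ∃ a : ℕ, (1001 : ℝ) ^ j * 10 ^ 8 < 1000 ^ j * 693147 * a ∧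
      (2 : ℝ) ^ a ≤ n ^ (100 : ℕ) :=
    ⟨_, mod_cast Nat.lt_mul_div_succ _ (by positivity), mod_cast of_decide_eq_true h⟩
  have hn : (0 : ℝ) < n :=
    (Nat.cast_nonneg n).lt_of_ne' fun h0 ↦ by
      have : (0 : ℝ) < 2 ^ a := by positivity
      rw [h0, zero_pow (by norm_num)] at htest
      linarith
  have hlog : a * 0.693147 ≤ 100 * log n := by
    calc a * 0.693147 ≤ a * log 2 := by
          gcongr
          linarith [log_two_gt_d9]
      _ = log (2 ^ a) := (log_pow _ _).symm
      _ ≤ log (n ^ (100 : ℕ)) := log_le_log (by positivity) htest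
      _ = 100 * log n := by rw [log_pow, Nat.cast_ofNat]
  have hexp : exp (2 * j / 2001) ≤ log n := by
    calc exp (2 * j / 2001) ≤ (1001 / 1000) ^ j := by
          have := exp_two_mul_div_le (n := 1000) (by norm_num) j
          norm_num at this ⊢
          exact this
      _ = 1001 ^ j / 1000 ^ j := div_pow _ _ _
      _ ≤ log n := by
          rw [div_le_iff₀ (by positivity)]
          nlinarith [pow_pos (by norm_num : (0 : ℝ) < 1000) j]
  have hk : log n ≤ log k := log_le_log hn (mod_cast hnk)
  exact (le_log_iff_exp_le ((exp_pos _).trans_le (hexp.trans hk))).mpr (hexp.trans hk)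

theorem mul_add_div_le_mul_add_div {a b : ℝ} (ha : 1.19 ≤ a) (hab : a ≤ b) :
    1.7811 * a + 2.51 / a ≤ 1.7811 * b + 2.51 / b := by
  have : 0 < a := by linarith
  have : 0 < b := by linarith
  have hdiff : 2.51 / a - 2.51 / b = (b - a) * (2.51 / (a * b)) := by
    field_simp
  have hquot : 2.51 / (a * b) ≤ 1.7811 := by
    rw [div_le_iff₀ (by positivity)]
    nlinarith
  nlinarith [mul_le_mul_of_nonneg_left hquot (sub_nonneg.mpr hab)]

/-- A verification of the totient bound for the primorials beyond `R`, where `P = R#` and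
`Q = φ(R#)`. An entry `(m, j)` of the certificate passes to `(R + m)#`, sieving the new primes by
`P`: it claims that `P * (R + 1)` satisfies `logLogTest j` and that the bound evaluated at
`2 * j / 2001` dominates `(R + m)# / φ((R + m)#)`. The last primorial must push `log log` to `9`. -/
def primorialTest (R P Q : ℕ) : List (ℕ × ℕ) → Bool
  | [] => logLogTest 9005 (P * (R + 1))
  | (m, j) :: l =>
    let P' := P * ∏ p ∈ Ioc R (R + m) with p.Coprime P, p
    let Q' := Q * ∏ p ∈ Ioc R (R + m) with p.Coprime P, (p - 1)
    R + m < (R + 1) ^ 2 && logLogTest j (P * (R + 1)) && 119 * 2001 ≤ 200 * j &&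
      P' * (20000 * j * 2001) ≤ Q' * (71244 * j ^ 2 + 25100 * 2001 ^ 2) &&
      primorialTest (R + m) P' Q' l

theorem primorialTest_six : primorialTest 6 30 8
    [(4, 1676), (2, 2047), (4, 2333), (2, 2577), (4, 2779), (6, 2957), (2, 3119), (6, 3260),
     (4, 3390), (2, 3508), (4, 3615), (6, 3714), (6, 3807), (2, 3893), (6, 3974), (6, 4050),
     (10, 4189), (14, 4315), (6, 4429), (6, 4534), (22, 4630), (18, 4762), (14, 4882), (18, 4991),
     (18, 5123), (34, 5242), (30, 5376), (30, 5496), (54, 5626), (42, 5763), (54, 5902), (60, 6041),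
     (84, 6178), (72, 6313), (102, 6455), (116, 6599), (136, 6736), (140, 6880), (166, 7021),
     (212, 7164), (216, 7306), (270, 7445), (294, 7585), (360, 7724), (370, 7863), (476, 8003),
     (490, 8143), (596, 8282), (678, 8420), (766, 8557), (852, 8694), (984, 8829),
     (1130, 8964)] = true := by
  decide +kernel

theorem div_le_of_mul_le_mul {P Q j : ℕ} (hQ : Q ≠ 0) (hj : j ≠ 0)
    (h : P * (20000 * j * 2001) ≤ Q * (71244 * j ^ 2 + 25100 * 2001 ^ 2)) :
    (P / Q : ℝ) ≤ 1.7811 * (2 * j / 2001) + 2.51 / (2 * j / 2001) := by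
  have : (0 : ℝ) < Q := mod_cast Nat.pos_of_ne_zero hQ
  have : (0 : ℝ) < j := mod_cast Nat.pos_of_ne_zero hj
  have hcast : (P : ℝ) * (20000 * j * 2001) ≤ Q * (71244 * j ^ 2 + 25100 * 2001 ^ 2) := mod_cast h
  have hcommon : 1.7811 * (2 * j / 2001) + 2.51 / (2 * j / 2001) =
      (71244 * j ^ 2 + 25100 * 2001 ^ 2 : ℝ) / (20000 * j * 2001) := by
    field_simp
    ring
  rw [hcommon, div_le_div_iff₀ (by positivity) (by positivity), mul_comm _ (Q : ℝ)]
  exact hcast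

theorem div_totient_le_of_primorialTest {k : ℕ} (hk : k ≠ 0) {l : List (ℕ × ℕ)} {R : ℕ}
    (hR : R ≠ 0) (htest : primorialTest R (primorial R) (primorial R).totient l)
    (hcard : #R.primesLE < #k.primeFactors) :
    k / k.totient ≤ 1.7811 * log (log k) + 2.51 / log (log k) := by
  have hRk := primorial_mul_succ_le hk hcard
  induction l generalizing R with
  | nil =>
    have hlog := le_log_log_of_logLogTest htest hRk
    exact div_totient_le_of_nine_le_log_log hk (by norm_num at hlog; linarith)
  | cons e l ih =>
    obtain ⟨m, j⟩ := e
    simp only [primorialTest, Bool.and_eq_true, decide_eq_true_eq] at htest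
    obtain ⟨⟨⟨⟨hm, hlog⟩, hj⟩, hbound⟩, htail⟩ := htest
    have hP := prod_primesLE_add (fun p ↦ p) hm
    have hQ := prod_primesLE_add (fun p ↦ p - 1) hm
    rw [← primorial_eq_prod_primesLE, ← primorial_eq_prod_primesLE] at hP
    rw [← totient_primorial, ← totient_primorial] at hQ
    rw [← hP, ← hQ] at hbound htail
    rcases le_or_gt #k.primeFactors #(R + m).primesLE with hle | hlt
    · have hφ := Nat.totient_pos.mpr (primorial_pos (R + m))
      have hj' : (119 * 2001 : ℝ) ≤ 200 * j := mod_cast hj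
      calc (k / k.totient : ℝ) ≤ primorial (R + m) / (primorial (R + m)).totient :=
            div_totient_le_primorial_div_totient hk (by omega) hle
        _ ≤ 1.7811 * (2 * j / 2001) + 2.51 / (2 * j / 2001) :=
            div_le_of_mul_le_mul hφ.ne' (by omega) hbound
        _ ≤ 1.7811 * log (log k) + 2.51 / log (log k) :=
            mul_add_div_le_mul_add_div (by linarith) (le_log_log_of_logLogTest hlog hRk)
    · exact ih (by omega) htail hlt (primorial_mul_succ_le hk hlt)

theorem div_totient_le_of_card_primeFactors_le {k : ℕ} (hk : k ≠ 0)
    (hcard : #k.primeFactors ≤ #(Nat.primesLE 6)) : (k / k.totient : ℝ) ≤ 15 / 4 := by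
  have h := div_totient_le_primorial_div_totient hk (by norm_num) hcard
  rw [show primorial 6 = 30 by decide, show Nat.totient 30 = 8 by decide] at h
  norm_num at h
  exact h

theorem fifteen_div_four_le_mul_add_div {a : ℝ} (ha : 0 < a) : 15 / 4 ≤ 1.7811 * a + 2.51 / a := by
  have heq : 1.7811 * a + 2.51 / a - 15 / 4 = (1.7811 * a ^ 2 - 15 / 4 * a + 2.51) / a := by
    field_simp
    ring
  have : 0 ≤ 1.7811 * a ^ 2 - 15 / 4 * a + 2.51 := by nlinarith [sq_nonneg (a - 1.05)]
  have := div_nonneg this ha.le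
  linarith

theorem log_log_pos {x : ℝ} (hx : 3 ≤ x) : 0 < log (log x) :=
  log_pos ((lt_log_iff_exp_lt (by linarith)).mpr (exp_one_lt_three.trans_le hx))

theorem div_totient_le {k : ℕ} (hk : 3 ≤ k) :
    k / k.totient ≤ 1.7811 * log (log k) + 2.51 / log (log k) := by
  have hk0 : k ≠ 0 := by omega
  rcases le_or_gt #k.primeFactors #(Nat.primesLE 6) with hle | hlt
  · exact (div_totient_le_of_card_primeFactors_le hk0 hle).trans
      (fifteen_div_four_le_mul_add_div (log_log_pos (mod_cast hk)))
  · have htest := primorialTest_six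
    rw [← show primorial 6 = 30 by decide, ← show (primorial 6).totient = 8 by decide] at htest
    exact div_totient_le_of_primorialTest hk0 (by norm_num) htest hlt

theorem totient_lower_bound (k : ℕ) (hk : 3 ≤ k) :
    (Nat.totient k : ℝ) ≥
      k / (1.7811 * Real.log (Real.log k) + 2.51 / Real.log (Real.log k)) := by
  have hL : 0 < log (log k) := log_log_pos (mod_cast hk)
  have hφ : (0 : ℝ) < k.totient := mod_cast Nat.totient_pos.mpr (by omega)
  exact (div_le_comm₀ (by positivity) hφ).mpr (div_totient_le hk)
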